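/- arXiv:2002.10166 — 9 statements merged into one kernel-verified Lean document; each statement's English description precedes it below -/
import Mathlib

section
/- Let X be a real vector space and f an asymmetric norm on X. Equip X with the topology τ_f generated by the forward balls {y : f (y - x) < ε} for x ∈ X and ε > 0. Then (X, τ_f) is a T1 topological space if and only if every x ∈ X with f x = 1 satisfies f (-x) ≠ 0. -/
/-- `f` is an asymmetric norm on the real vector space `X`. -/
def IsAsymmNorm {X : Type*} [AddCommGroup X] [Module ℝ X] (f : X → ℝ) : Prop :=
  (∀ x, 0 ≤ f x) ∧ (∀ (c : ℝ), 0 ≤ c → ∀ x, f (c • x) = c * f x) ∧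
  (∀ x y, f (x + y) ≤ f x + f y) ∧ (∀ x, f x = 0 → f (-x) = 0 → x = 0)

/-- The topology on `X` generated by the forward balls of the asymmetric norm `f`. -/
def asymmTopology {X : Type*} [AddCommGroup X] [Module ℝ X] (f : X → ℝ) :
    TopologicalSpace X :=
  TopologicalSpace.generateFrom
    {S | ∃ (x : X) (ε : ℝ), 0 < ε ∧ S = {y | f (y - x) < ε}}

/-!
The specialization preorder of `τ_f` is `x ⤳ y ↔ f (x - y) = 0`: a ball containing `y` contains
every `x` with `f (x - y) = 0` by the triangle inequality, and `f (x - y)` is less than every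
`ε > 0` if `x` lies in all balls centred at `y`. As T1 means that specialization is equality, it
means here that `f` vanishes only at `0`. A nonzero `v` with `f v = 0` has `f (-v) > 0` by
definiteness, and rescaling `-v` gives a unit vector `x` with `f (-x) = 0`.
-/

theorem specializes_generateFrom_iff {α : Type*} {g : Set (Set α)} {x y : α} :
    @Specializes α (TopologicalSpace.generateFrom g) x y ↔ ∀ s ∈ g, y ∈ s → x ∈ s := by
  let _ := TopologicalSpace.generateFrom g
  rw [specializes_iff_pure]
  exact TopologicalSpace.tendsto_nhds_generateFrom_iff (m := id) (f := pure x)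

section Subadditive

variable {X : Type*} [AddCommGroup X] [Module ℝ X] {f : X → ℝ}

theorem specializes_asymmTopology_iff_sub_nonpos (h_zero : f 0 ≤ 0)
    (h_add : ∀ x y, f (x + y) ≤ f x + f y) {x y : X} :
    @Specializes X (asymmTopology f) x y ↔ f (x - y) ≤ 0 := by
  rw [asymmTopology, specializes_generateFrom_iff]
  constructor
  · intro h
    refine le_of_forall_gt fun ε hε => h {z | f (z - y) < ε} ⟨y, ε, hε, rfl⟩ ?_
    simpa using h_zero.trans_lt hε
  · rintro hxy _ ⟨c, ε, -, rfl⟩ (hy : f (y - c) < ε)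
    calc
      f (x - c) = f ((x - y) + (y - c)) := by rw [sub_add_sub_cancel]
      _ ≤ f (x - y) + f (y - c) := h_add _ _
      _ < ε := by linarith

theorem t1Space_asymmTopology_iff_nonpos_imp_eq_zero (h_zero : f 0 ≤ 0)
    (h_add : ∀ x y, f (x + y) ≤ f x + f y) :
    @T1Space X (asymmTopology f) ↔ ∀ x, f x ≤ 0 → x = 0 := by
  let _ := asymmTopology f
  rw [t1Space_iff_specializes_imp_eq]
  simp only [specializes_asymmTopology_iff_sub_nonpos h_zero h_add]
  constructor
  · intro h x hx
    exact h (by rwa [sub_zero])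
  · intro h x y hxy
    exact sub_eq_zero.mp (h _ hxy)

end Subadditive

namespace IsAsymmNorm

variable {X : Type*} [AddCommGroup X] [Module ℝ X] {f : X → ℝ}

theorem nonneg (hf : IsAsymmNorm f) (x : X) : 0 ≤ f x :=
  hf.1 x

theorem map_smul (hf : IsAsymmNorm f) {c : ℝ} (hc : 0 ≤ c) (x : X) : f (c • x) = c * f x :=
  hf.2.1 c hc x

theorem map_add_le (hf : IsAsymmNorm f) (x y : X) : f (x + y) ≤ f x + f y :=
  hf.2.2.1 x y

theorem eq_zero_of_map_eq_zero_of_map_neg_eq_zero (hf : IsAsymmNorm f) {x : X} (hx : f x = 0)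
    (hx_neg : f (-x) = 0) : x = 0 :=
  hf.2.2.2 x hx hx_neg

theorem map_zero (hf : IsAsymmNorm f) : f 0 = 0 := by
  simpa using hf.map_smul le_rfl 0

theorem t1Space_iff_map_eq_zero_imp_eq_zero (hf : IsAsymmNorm f) :
    @T1Space X (asymmTopology f) ↔ ∀ x, f x = 0 → x = 0 := by
  rw [t1Space_asymmTopology_iff_nonpos_imp_eq_zero hf.map_zero.le hf.map_add_le]
  simp only [(hf.nonneg _).ge_iff_eq']

theorem exists_map_eq_one_and_map_neg_eq_zero (hf : IsAsymmNorm f) {v : X} (hv : f v = 0)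
    (hv_ne : v ≠ 0) : ∃ x, f x = 1 ∧ f (-x) = 0 := by
  have h_neg : f (-v) ≠ 0 := fun h =>
    hv_ne (hf.eq_zero_of_map_eq_zero_of_map_neg_eq_zero hv h)
  have h_inv : 0 ≤ (f (-v))⁻¹ := inv_nonneg.mpr (hf.nonneg _)
  refine ⟨(f (-v))⁻¹ • -v, ?_, ?_⟩
  · rw [hf.map_smul h_inv, inv_mul_cancel₀ h_neg]
  · rw [← smul_neg, neg_neg, hf.map_smul h_inv, hv, mul_zero]

end IsAsymmNorm

/-- `(X, τ_f)` is T1 iff every `x` with `f x = 1` satisfies `f (-x) ≠ 0`. -/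
theorem t1_iff_unit_sphere {X : Type*} [AddCommGroup X] [Module ℝ X]
    (f : X → ℝ) (hf : IsAsymmNorm f) :
    @T1Space X (asymmTopology f) ↔ ∀ x : X, f x = 1 → f (-x) ≠ 0 := by
  rw [hf.t1Space_iff_map_eq_zero_imp_eq_zero]
  constructor
  · intro h x hx hx_neg
    have hx_zero : x = 0 := neg_eq_zero.mp (h (-x) hx_neg)
    rw [hx_zero, hf.map_zero] at hx
    exact zero_ne_one hx
  · intro h v hv
    by_contra hv_ne
    obtain ⟨x, hx, hx_neg⟩ := hf.exists_map_eq_one_and_map_neg_eq_zero hv hv_ne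
    exact h x hx hx_neg
end

section
/- Let X be a nontrivial real vector space and f an asymmetric norm on X with c(X) := sInf {f (-x) : x ∈ X, f x = 1} > 0. Then sSup {f (-x) : x ∈ X, f x = 1} * sInf {f (-x) : x ∈ X, f x = 1} = 1; in particular sSup {f (-x) : x ∈ X, f x = 1} = 1 / c(X). -/
/-!
Since `0 < sInf S` for `S = {f (-x) : f x = 1}`, all elements of `S` are positive. If `f x = 1`,
then `y = (f (-x))⁻¹ • (-x)` satisfies `f y = 1` and `f (-y) = (f (-x))⁻¹`. Hence `S` is closed
under inversion, which exchanges its infimum and supremum.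
-/

open scoped Pointwise

theorem isLUB_inv_of_isGLB_of_pos {G₀ : Type*} [GroupWithZero G₀] [PartialOrder G₀]
    [PosMulReflectLT G₀] [MulPosReflectLT G₀] {s : Set G₀} {a : G₀}
    (hs : s.Nonempty) (ha : 0 < a) (h : IsGLB s a) : IsLUB s⁻¹ a⁻¹ := by
  have hpos : ∀ x ∈ s, 0 < x := fun x hx => ha.trans_le (h.1 hx)
  refine ⟨fun y hy => ?_, fun b hb => ?_⟩
  · exact (le_inv_comm₀ ha (inv_pos.1 (hpos _ hy))).1 (h.1 hy)
  · have hinv_le : ∀ x ∈ s, x⁻¹ ≤ b := fun x hx => hb (Set.inv_mem_inv.2 hx)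
    obtain ⟨x₀, hx₀⟩ := hs
    have hb_pos : 0 < b := (inv_pos.2 (hpos x₀ hx₀)).trans_le (hinv_le x₀ hx₀)
    have hb_inv_le : b⁻¹ ≤ a := h.2 fun x hx => inv_le_of_inv_le₀ (hpos x hx) (hinv_le x hx)
    exact inv_le_of_inv_le₀ hb_pos hb_inv_le

theorem isGLB_sInf_of_sInf_pos {s : Set ℝ} (h : 0 < sInf s) : IsGLB s (sInf s) := by
  -- In `ℝ`, the infimum of a set that is empty or unbounded below is `0` by convention.
  have hne : s.Nonempty := by
    by_contra hs
    simp [Set.not_nonempty_iff_eq_empty.1 hs] at h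
  have hbdd : BddBelow s := by
    by_contra hs
    simp [Real.sInf_of_not_bddBelow hs] at h
  exact isGLB_csInf hne hbdd

theorem sSup_inv_of_sInf_pos {s : Set ℝ} (h : 0 < sInf s) : sSup s⁻¹ = (sInf s)⁻¹ := by
  have hglb : IsGLB s (sInf s) := isGLB_sInf_of_sInf_pos h
  exact (isLUB_inv_of_isGLB_of_pos hglb.nonempty h hglb).csSup_eq hglb.nonempty.inv

section PositivelyHomogeneous

variable {K X : Type*} [GroupWithZero K] [PartialOrder K] [PosMulReflectLT K]
  [AddGroup X] [DistribSMul K X] {f : X → K}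

theorem inv_mem_image_neg_of_pos (hf : ∀ c : K, 0 < c → ∀ x, f (c • x) = c * f x) {a : K}
    (ha : a ∈ (fun x => f (-x)) '' {x | f x = 1}) (ha_pos : 0 < a) :
    a⁻¹ ∈ (fun x => f (-x)) '' {x | f x = 1} := by
  obtain ⟨x, hx : f x = 1, rfl : f (-x) = a⟩ := ha
  have hinv_pos : 0 < (f (-x))⁻¹ := inv_pos.2 ha_pos
  refine ⟨(f (-x))⁻¹ • -x, ?_, ?_⟩
  · change f ((f (-x))⁻¹ • -x) = 1
    rw [hf _ hinv_pos, inv_mul_cancel₀ ha_pos.ne']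
  · simp only [smul_neg, neg_neg, hf _ hinv_pos, hx, mul_one]

theorem inv_image_neg_eq_self (hf : ∀ c : K, 0 < c → ∀ x, f (c • x) = c * f x)
    (hpos : ∀ x, f x = 1 → 0 < f (-x)) :
    ((fun x => f (-x)) '' {x | f x = 1})⁻¹ = (fun x => f (-x)) '' {x | f x = 1} := by
  rw [Set.inv_eq_self_iff_inv_subset, Set.inv_subset]
  rintro _ ⟨x, hx, rfl⟩
  exact inv_mem_image_neg_of_pos hf (Set.mem_image_of_mem _ hx) (hpos x hx)

end PositivelyHomogeneous

theorem sSup_mul_sInf_eq_one_general {X : Type*} [AddGroup X] [DistribSMul ℝ X]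
    (f : X → ℝ) (hf : ∀ c : ℝ, 0 < c → ∀ x, f (c • x) = c * f x)
    (hc : 0 < sInf ((fun x => f (-x)) '' {x | f x = 1})) :
    sSup ((fun x => f (-x)) '' {x | f x = 1}) *
      sInf ((fun x => f (-x)) '' {x | f x = 1}) = 1 ∧
    sSup ((fun x => f (-x)) '' {x | f x = 1}) =
      1 / sInf ((fun x => f (-x)) '' {x | f x = 1}) := by
  have hpos : ∀ x, f x = 1 → 0 < f (-x) := fun x hx =>
    hc.trans_le ((isGLB_sInf_of_sInf_pos hc).1 (Set.mem_image_of_mem _ hx))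
  have hsup : sSup ((fun x => f (-x)) '' {x | f x = 1}) =
      (sInf ((fun x => f (-x)) '' {x | f x = 1}))⁻¹ := by
    rw [← sSup_inv_of_sInf_pos hc, inv_image_neg_eq_self hf hpos]
  rw [hsup]
  exact ⟨inv_mul_cancel₀ hc.ne', (one_div _).symm⟩

/-- If `c(X) > 0`, then `sSup {f (-x) : f x = 1} * sInf {f (-x) : f x = 1} = 1`;
in particular the sup is `1 / c(X)`. -/
theorem sSup_mul_sInf_eq_one {X : Type*} [AddCommGroup X] [Module ℝ X] [Nontrivial X]
    (f : X → ℝ) (hf : IsAsymmNorm f)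
    (hc : 0 < sInf ((fun x => f (-x)) '' {x | f x = 1})) :
    sSup ((fun x => f (-x)) '' {x | f x = 1}) *
      sInf ((fun x => f (-x)) '' {x | f x = 1}) = 1 ∧
    sSup ((fun x => f (-x)) '' {x | f x = 1}) =
      1 / sInf ((fun x => f (-x)) '' {x | f x = 1}) :=
  sSup_mul_sInf_eq_one_general f (fun c hc_pos => hf.2.1 c hc_pos.le) hc
end

section
/- Let X be a nontrivial real vector space and f an asymmetric norm on X with c(X) := sInf {f (-x) : x ∈ X, f x = 1} > 0. Then for every x ∈ X, c(X) * max (f x) (f (-x)) ≤ f x ≤ max (f x) (f (-x)); that is, c(X) * ‖x‖_s ≤ f x ≤ ‖x‖_s where ‖x‖_s is the associated norm. -/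
/-- The index of symmetry `c(X)` of the gauge `f`, comparing `f (-x)` with `f x`. It takes the junk
value `sInf ∅ = 0` if `f` does not attain the value `1`. -/
noncomputable def indexOfSymmetry {X : Type*} [Neg X] (f : X → ℝ) : ℝ :=
  sInf ((fun x => f (-x)) '' {x | f x = 1})

section Neg

variable {X : Type*} [Neg X] {f : X → ℝ}

lemma indexOfSymmetry_nonneg (hnonneg : ∀ x, 0 ≤ f x) : 0 ≤ indexOfSymmetry f :=
  Real.sInf_nonneg (Set.forall_mem_image.2 fun x _ => hnonneg (-x))

lemma indexOfSymmetry_le_map_neg (hnonneg : ∀ x, 0 ≤ f x) {x : X} (hx : f x = 1) :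
    indexOfSymmetry f ≤ f (-x) :=
  csInf_le ⟨0, Set.forall_mem_image.2 fun y _ => hnonneg (-y)⟩ (Set.mem_image_of_mem _ hx)

end Neg

section Module

variable {X : Type*} [AddCommGroup X] [Module ℝ X] {f : X → ℝ}

lemma indexOfSymmetry_mul_le_map_neg (hnonneg : ∀ x, 0 ≤ f x)
    (hsmul : ∀ c : ℝ, 0 ≤ c → ∀ x, f (c • x) = c * f x) (x : X) :
    indexOfSymmetry f * f x ≤ f (-x) := by
  rcases (hnonneg x).eq_or_lt with hx | hx
  · simpa [← hx] using hnonneg (-x)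
  · have hinv : 0 ≤ (f x)⁻¹ := inv_nonneg.2 hx.le
    have hunit : f ((f x)⁻¹ • x) = 1 := by rw [hsmul _ hinv, inv_mul_cancel₀ hx.ne']
    rw [← le_div_iff₀ hx]
    calc
      indexOfSymmetry f ≤ f (-((f x)⁻¹ • x)) := indexOfSymmetry_le_map_neg hnonneg hunit
      _ = f (-x) / f x := by rw [← smul_neg, hsmul _ hinv, inv_mul_eq_div]

lemma indexOfSymmetry_mul_map_neg_le (hnonneg : ∀ x, 0 ≤ f x)
    (hsmul : ∀ c : ℝ, 0 ≤ c → ∀ x, f (c • x) = c * f x) (x : X) :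
    indexOfSymmetry f * f (-x) ≤ f x := by
  simpa only [neg_neg] using indexOfSymmetry_mul_le_map_neg hnonneg hsmul (-x)

lemma indexOfSymmetry_le_one (hnonneg : ∀ x, 0 ≤ f x)
    (hsmul : ∀ c : ℝ, 0 ≤ c → ∀ x, f (c • x) = c * f x) : indexOfSymmetry f ≤ 1 := by
  rcases Set.eq_empty_or_nonempty {x | f x = 1} with hempty | ⟨x, hx : f x = 1⟩
  · simp [indexOfSymmetry, hempty]
  · have hc := indexOfSymmetry_nonneg hnonneg
    rw [← sq_le_one_iff₀ hc]
    calc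
      indexOfSymmetry f ^ 2 = indexOfSymmetry f * indexOfSymmetry f := sq _
      _ ≤ indexOfSymmetry f * f (-x) :=
        mul_le_mul_of_nonneg_left (indexOfSymmetry_le_map_neg hnonneg hx) hc
      _ ≤ f x := indexOfSymmetry_mul_map_neg_le hnonneg hsmul x
      _ = 1 := hx

theorem index_vs_symmetrized_norm_general (hnonneg : ∀ x, 0 ≤ f x)
    (hsmul : ∀ c : ℝ, 0 ≤ c → ∀ x, f (c • x) = c * f x) (x : X) :
    indexOfSymmetry f * max (f x) (f (-x)) ≤ f x ∧ f x ≤ max (f x) (f (-x)) := by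
  refine ⟨?_, le_max_left _ _⟩
  rw [mul_max_of_nonneg _ _ (indexOfSymmetry_nonneg hnonneg)]
  exact max_le
    (mul_le_of_le_one_left (hnonneg x) (indexOfSymmetry_le_one hnonneg hsmul))
    (indexOfSymmetry_mul_map_neg_le hnonneg hsmul x)

end Module

/-- If `c(X) > 0`, then `c(X) * ‖x‖ₛ ≤ f x ≤ ‖x‖ₛ` where `‖x‖ₛ = max (f x) (f (-x))`
is the associated norm. -/
theorem index_vs_symmetrized_norm {X : Type*} [AddCommGroup X] [Module ℝ X] [Nontrivial X]
    (f : X → ℝ) (hf : IsAsymmNorm f)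
    (hc : 0 < sInf ((fun x => f (-x)) '' {x | f x = 1})) :
    ∀ x : X,
      sInf ((fun x => f (-x)) '' {x | f x = 1}) * max (f x) (f (-x)) ≤ f x ∧
      f x ≤ max (f x) (f (-x)) :=
  index_vs_symmetrized_norm_general hf.1 hf.2.1
end

section
/- Let (X, f) and (Y, g) be asymmetric normed spaces, each carrying the real normed space structure of its associated norm, with X nontrivial and c(X) := sInf {f (-x) : x ∈ X, f x = 1} > 0. Let T : X →L[ℝ] Y be a continuous linear map belonging to L_c(X, Y). Then -T belongs to L_c(X, Y), and writing ‖T|_{L_c} := sSup {g (T x) : f x ≤ 1}: c(X) * ‖T|_{L_c} ≤ ‖-T|_{L_c} ≤ (1 / c(X)) * ‖T|_{L_c}, and ‖T‖ ≤ ‖T|_{L_c} ≤ (1 / c(X)) * ‖T‖, where ‖T‖ is the operator norm for the associated norms. -/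
/-- Positive homogeneity of a real-valued function; scalar `0` is included, so that `f 0 = 0`. -/
def IsPosHomogeneous {X : Type*} [SMul ℝ X] (f : X → ℝ) : Prop :=
  ∀ c : ℝ, 0 ≤ c → ∀ x, f (c • x) = c * f x

/-- The index of symmetry `c(X)` of `(X, f)`; it takes the value `0` if `f` never equals `1`. -/
noncomputable def symmIndex {X : Type*} [Neg X] (f : X → ℝ) : ℝ :=
  sInf ((fun x => f (-x)) '' {x | f x = 1})

/-- The supremum of `h` over the unit ball of `f`; the asymmetric operator norm `‖T|_{L_c}` is the
case `h = g ∘ T`. It takes the value `0` if `h` is unbounded above on the ball. -/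
noncomputable def unitBallSup {X : Type*} (f h : X → ℝ) : ℝ :=
  sSup (h '' {x | f x ≤ 1})

theorem unitBallSup_le {X : Type*} {f h : X → ℝ} {C : ℝ} (hC : 0 ≤ C)
    (hle : ∀ x, h x ≤ C * f x) : unitBallSup f h ≤ C := by
  refine Real.sSup_le ?_ hC
  rintro _ ⟨x, hx, rfl⟩
  exact (hle x).trans (mul_le_of_le_one_right hC hx)

namespace IsPosHomogeneous

theorem comp_map {X Y F : Type*} [SMul ℝ X] [SMul ℝ Y] [FunLike F X Y]
    [MulActionHomClass F ℝ X Y] {g : Y → ℝ} (hg : IsPosHomogeneous g) (T : F) :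
    IsPosHomogeneous (fun x => g (T x)) := fun c hc x => by
  simpa only [map_smul] using hg c hc (T x)

section Module

variable {X : Type*} [AddCommGroup X] [Module ℝ X] {f h : X → ℝ}

theorem map_zero (hf : IsPosHomogeneous f) : f 0 = 0 := by
  simpa using hf 0 le_rfl 0

theorem map_inv_smul_self (hf : IsPosHomogeneous f) {x : X} (hx : 0 < f x) :
    f ((f x)⁻¹ • x) = 1 := by
  rw [hf _ (inv_nonneg.2 hx.le), inv_mul_cancel₀ hx.ne']

theorem symmIndex_mul_le (hf : IsPosHomogeneous f) (hf₀ : ∀ x, 0 ≤ f x) (x : X) :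
    symmIndex f * f x ≤ f (-x) := by
  rcases (hf₀ x).eq_or_lt with hx | hx
  · rw [← hx, mul_zero]
    exact hf₀ _
  · have hle : symmIndex f ≤ f (-((f x)⁻¹ • x)) :=
      csInf_le ⟨0, by rintro _ ⟨y, -, rfl⟩; exact hf₀ _⟩ ⟨_, hf.map_inv_smul_self hx, rfl⟩
    rwa [← smul_neg, hf _ (inv_nonneg.2 hx.le), inv_mul_eq_div, le_div_iff₀ hx] at hle

theorem symmIndex_mul_map_neg_le (hf : IsPosHomogeneous f) (hf₀ : ∀ x, 0 ≤ f x) (x : X) :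
    symmIndex f * f (-x) ≤ f x := by
  simpa only [neg_neg] using hf.symmIndex_mul_le hf₀ (-x)

theorem symmIndex_le_one (hf : IsPosHomogeneous f) (hf₀ : ∀ x, 0 ≤ f x) : symmIndex f ≤ 1 := by
  rcases {x | f x = 1}.eq_empty_or_nonempty with hempty | ⟨x, hx : f x = 1⟩
  · simp [symmIndex, hempty]
  · have hlower : symmIndex f ≤ f (-x) := by
      simpa only [hx, mul_one] using hf.symmIndex_mul_le hf₀ x
    have hupper : symmIndex f * f (-x) ≤ 1 := hx ▸ hf.symmIndex_mul_map_neg_le hf₀ x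
    by_contra! hlt
    nlinarith

theorem symmIndex_mul_max_le (hf : IsPosHomogeneous f) (hf₀ : ∀ x, 0 ≤ f x) (x : X) :
    symmIndex f * max (f x) (f (-x)) ≤ f x := by
  rcases max_choice (f x) (f (-x)) with hmax | hmax <;> rw [hmax]
  · exact mul_le_of_le_one_left (hf₀ x) (hf.symmIndex_le_one hf₀)
  · exact hf.symmIndex_mul_map_neg_le hf₀ x

theorem unitBallSup_nonneg (hf : IsPosHomogeneous f) (hh : IsPosHomogeneous h) :
    0 ≤ unitBallSup f h :=
  Real.sSup_nonneg' ⟨h 0, ⟨0, hf.map_zero.trans_le zero_le_one, rfl⟩, hh.map_zero.ge⟩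

theorem le_unitBallSup_mul (hf : IsPosHomogeneous f) (hf₀ : ∀ x, 0 ≤ f x)
    (hh : IsPosHomogeneous h) {C : ℝ} (hC : 0 ≤ C) (hle : ∀ x, h x ≤ C * f x) (x : X) :
    h x ≤ unitBallSup f h * f x := by
  rcases (hf₀ x).eq_or_lt with hx | hx
  · simpa only [← hx, mul_zero] using hle x
  · have hbdd : BddAbove (h '' {y | f y ≤ 1}) :=
      ⟨C, by rintro _ ⟨y, hy, rfl⟩; exact (hle y).trans (mul_le_of_le_one_right hC hy)⟩
    have hsup : h ((f x)⁻¹ • x) ≤ unitBallSup f h :=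
      le_csSup hbdd ⟨_, (hf.map_inv_smul_self hx).le, rfl⟩
    rwa [hh _ (inv_nonneg.2 hx.le), inv_mul_eq_div, div_le_iff₀ hx] at hsup

theorem unitBallSup_comp_neg_le (hf : IsPosHomogeneous f) (hf₀ : ∀ x, 0 ≤ f x)
    (hc : 0 < symmIndex f) (hh : IsPosHomogeneous h) {C : ℝ} (hC : 0 ≤ C)
    (hle : ∀ x, h x ≤ C * f x) :
    unitBallSup f (fun x => h (-x)) ≤ 1 / symmIndex f * unitBallSup f h := by
  have hS : 0 ≤ unitBallSup f h := hf.unitBallSup_nonneg hh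
  refine unitBallSup_le (by positivity) fun x => ?_
  have hneg : f (-x) ≤ f x / symmIndex f :=
    (le_div_iff₀' hc).2 (hf.symmIndex_mul_map_neg_le hf₀ x)
  calc h (-x) ≤ unitBallSup f h * f (-x) := hf.le_unitBallSup_mul hf₀ hh hC hle (-x)
    _ ≤ unitBallSup f h * (f x / symmIndex f) := by gcongr
    _ = 1 / symmIndex f * unitBallSup f h * f x := by ring

end Module

end IsPosHomogeneous

section Seminormed

variable {X Y : Type*} [SeminormedAddCommGroup X] [NormedSpace ℝ X]
  [SeminormedAddCommGroup Y] [NormedSpace ℝ Y] {f : X → ℝ} {g : Y → ℝ}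

theorem opNorm_le_of_le_mul (hX : ∀ x, f x ≤ ‖x‖) (hY : ∀ y, ‖y‖ ≤ max (g y) (g (-y)))
    (T : X →L[ℝ] Y) {C : ℝ} (hC : 0 ≤ C) (hle : ∀ x, g (T x) ≤ C * f x) : ‖T‖ ≤ C := by
  have hle_norm (x : X) : g (T x) ≤ C * ‖x‖ :=
    (hle x).trans (mul_le_mul_of_nonneg_left (hX x) hC)
  refine T.opNorm_le_bound hC fun x => (hY _).trans (max_le (hle_norm x) ?_)
  simpa only [map_neg, norm_neg] using hle_norm (-x)

theorem IsPosHomogeneous.map_le_opNorm_mul (hf : IsPosHomogeneous f) (hf₀ : ∀ x, 0 ≤ f x)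
    (hX : ∀ x, ‖x‖ ≤ max (f x) (f (-x))) (hY : ∀ y, g y ≤ ‖y‖) (hc : 0 < symmIndex f)
    (T : X →L[ℝ] Y) (x : X) : g (T x) ≤ 1 / symmIndex f * ‖T‖ * f x := by
  have hx : ‖x‖ ≤ f x / symmIndex f :=
    (hX x).trans ((le_div_iff₀' hc).2 (hf.symmIndex_mul_max_le hf₀ x))
  calc g (T x) ≤ ‖T x‖ := hY _
    _ ≤ ‖T‖ * ‖x‖ := T.le_opNorm x
    _ ≤ ‖T‖ * (f x / symmIndex f) := by gcongr
    _ = 1 / symmIndex f * ‖T‖ * f x := by ring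

theorem asymm_operator_norm_inequalities_general
    (hf : IsPosHomogeneous f) (hf₀ : ∀ x, 0 ≤ f x) (hg : IsPosHomogeneous g)
    (hXnorm : ∀ x : X, ‖x‖ = max (f x) (f (-x)))
    (hYnorm : ∀ y : Y, ‖y‖ = max (g y) (g (-y)))
    (hc : 0 < symmIndex f) (T : X →L[ℝ] Y) :
    (∃ C ≥ (0 : ℝ), ∀ x, g (-(T x)) ≤ C * f x) ∧
    symmIndex f * unitBallSup f (fun x => g (T x)) ≤ unitBallSup f (fun x => g (-(T x))) ∧
    unitBallSup f (fun x => g (-(T x))) ≤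
      1 / symmIndex f * unitBallSup f (fun x => g (T x)) ∧
    ‖T‖ ≤ unitBallSup f (fun x => g (T x)) ∧
    unitBallSup f (fun x => g (T x)) ≤ 1 / symmIndex f * ‖T‖ := by
  have hfX (x : X) : f x ≤ ‖x‖ := (le_max_left _ _).trans_eq (hXnorm x).symm
  have hgY (y : Y) : g y ≤ ‖y‖ := (le_max_left _ _).trans_eq (hYnorm y).symm
  have hC (S : X →L[ℝ] Y) : 0 ≤ 1 / symmIndex f * ‖S‖ := by positivity
  have hbound (S : X →L[ℝ] Y) : ∀ x, g (S x) ≤ 1 / symmIndex f * ‖S‖ * f x :=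
    hf.map_le_opNorm_mul hf₀ (fun x => (hXnorm x).le) hgY hc S
  have hneg (S : X →L[ℝ] Y) : unitBallSup f (fun x => g (-(S x))) ≤
      1 / symmIndex f * unitBallSup f (fun x => g (S x)) := by
    simpa only [map_neg] using
      hf.unitBallSup_comp_neg_le hf₀ hc (hg.comp_map S) (hC S) (hbound S)
  refine ⟨⟨_, hC (-T), hbound (-T)⟩, ?_, hneg T, ?_, unitBallSup_le (hC T) (hbound T)⟩
  · rw [← le_div_iff₀' hc, ← one_div_mul_eq_div]
    simpa only [neg_apply, neg_neg] using hneg (-T)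
  · exact opNorm_le_of_le_mul hfX (fun y => (hYnorm y).le) T
      (hf.unitBallSup_nonneg (hg.comp_map T))
      (hf.le_unitBallSup_mul hf₀ (hg.comp_map T) (hC T) (hbound T))

end Seminormed

/-- If `c(X) > 0` and `T ∈ L_c(X,Y)`, then `-T ∈ L_c(X,Y)` and, with
`‖T|_{L_c} := sSup {g (T x) : f x ≤ 1}`, we have
`c(X) * ‖T|_{L_c} ≤ ‖-T|_{L_c} ≤ (1/c(X)) * ‖T|_{L_c}` and
`‖T‖ ≤ ‖T|_{L_c} ≤ (1/c(X)) * ‖T‖`. -/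
theorem asymm_operator_norm_inequalities
    {X Y : Type*} [NormedAddCommGroup X] [NormedSpace ℝ X] [Nontrivial X]
    [NormedAddCommGroup Y] [NormedSpace ℝ Y]
    (f : X → ℝ) (g : Y → ℝ) (hf : IsAsymmNorm f) (hg : IsAsymmNorm g)
    (hXnorm : ∀ x : X, ‖x‖ = max (f x) (f (-x)))
    (hYnorm : ∀ y : Y, ‖y‖ = max (g y) (g (-y)))
    (hc : 0 < sInf ((fun x => f (-x)) '' {x | f x = 1}))
    (T : X →L[ℝ] Y) (hT : ∃ C ≥ (0 : ℝ), ∀ x, g (T x) ≤ C * f x) :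
    (∃ C ≥ (0 : ℝ), ∀ x, g (-(T x)) ≤ C * f x) ∧
    (sInf ((fun x => f (-x)) '' {x | f x = 1}) *
        sSup ((fun x => g (T x)) '' {x | f x ≤ 1}) ≤
      sSup ((fun x => g (-(T x))) '' {x | f x ≤ 1})) ∧
    (sSup ((fun x => g (-(T x))) '' {x | f x ≤ 1}) ≤
      (1 / sInf ((fun x => f (-x)) '' {x | f x = 1})) *
        sSup ((fun x => g (T x)) '' {x | f x ≤ 1})) ∧
    (‖T‖ ≤ sSup ((fun x => g (T x)) '' {x | f x ≤ 1})) ∧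
    (sSup ((fun x => g (T x)) '' {x | f x ≤ 1}) ≤
      (1 / sInf ((fun x => f (-x)) '' {x | f x = 1})) * ‖T‖) :=
  asymm_operator_norm_inequalities_general hf.2.1 hf.1 hg.2.1 hXnorm hYnorm hc T
end

section
/- Let (X, f) and (Y, g) be asymmetric normed spaces, each carrying the real normed space structure of its associated norm, with Y a complete normed space. Assume c(X) = 0, i.e., for every ε > 0 there exists x with f x = 1 and f (-x) < ε, and assume there exists e ∈ Y with g e = 1 and g (-e) = 0. Let H : X →L[ℝ] Y satisfy ∃ C ≥ 0, ∀ x, g (H x) ≤ C * f x, and let r > 0. Then, inside the set B̄_r := {T : X →L[ℝ] Y | ∀ x, g (T x) ≤ r * f x} equipped with the subspace topology of the operator norm, the set G(H) := {T ∈ B̄_r | ¬ ∃ C ≥ 0, ∀ x, g (-(H x + T x)) ≤ C * f x} is a countable intersection of open sets and is dense in B̄_r. -/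
/-- `f` is an asymmetric seminorm on the real vector space `X`: the axioms of `IsAsymmNorm` other
than definiteness. -/
structure IsAsymmSeminorm {X : Type*} [AddCommGroup X] [Module ℝ X] (f : X → ℝ) : Prop where
  nonneg : ∀ x, 0 ≤ f x
  map_smul : ∀ c : ℝ, 0 ≤ c → ∀ x, f (c • x) = c * f x
  map_add_le : ∀ x y, f (x + y) ≤ f x + f y

lemma IsAsymmNorm.isAsymmSeminorm {X : Type*} [AddCommGroup X] [Module ℝ X] {f : X → ℝ}
    (hf : IsAsymmNorm f) : IsAsymmSeminorm f :=
  ⟨hf.1, hf.2.1, hf.2.2.1⟩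

namespace IsAsymmSeminorm

section Module

variable {X : Type*} [AddCommGroup X] [Module ℝ X] {f : X → ℝ}

lemma map_zero (hf : IsAsymmSeminorm f) : f 0 = 0 := by
  simpa using hf.map_smul 0 le_rfl 0

lemma map_smul_eq_max_mul (hf : IsAsymmSeminorm f) {e : X} (he : f (-e) = 0) (c : ℝ) :
    f (c • e) = max c 0 * f e := by
  rcases le_total 0 c with hc | hc
  · rw [hf.map_smul c hc, max_eq_left hc]
  · rw [← neg_smul_neg, hf.map_smul (-c) (neg_nonneg.2 hc), he, max_eq_right hc, mul_zero, zero_mul]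

lemma exists_linearMap_le_apply_eq (hf : IsAsymmSeminorm f) (x : X) :
    ∃ φ : X →ₗ[ℝ] ℝ, (∀ y, φ y ≤ f y) ∧ φ x = f x := by
  have hx (c : ℝ) (hc : c • x = 0) : (RingHom.id ℝ) c • f x = 0 := by
    rcases smul_eq_zero.1 hc with rfl | rfl
    · exact zero_smul ℝ (f x)
    · rw [hf.map_zero, smul_zero]
  let p := LinearPMap.mkSpanSingleton' x (f x) hx
  have hp : ∀ y : p.domain, p y ≤ f y := by
    rintro ⟨y, hy⟩
    obtain ⟨c, rfl⟩ := Submodule.mem_span_singleton.1 hy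
    rw [LinearPMap.mkSpanSingleton'_apply, RingHom.id_apply, smul_eq_mul]
    rcases le_total 0 c with hc | hc
    · exact (hf.map_smul c hc x).ge
    · exact (mul_nonpos_of_nonpos_of_nonneg hc (hf.nonneg x)).trans (hf.nonneg _)
  obtain ⟨φ, hφp, hφf⟩ :=
    exists_extension_of_le_sublinear p f (fun c hc => hf.map_smul c hc.le) hf.map_add_le hp
  refine ⟨φ, hφf, ?_⟩
  rw [hφp ⟨x, Submodule.mem_span_singleton_self x⟩]
  exact LinearPMap.mkSpanSingleton'_apply_self x (f x) hx _

end Module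

lemma continuous_of_le_norm {X : Type*} [SeminormedAddCommGroup X] [NormedSpace ℝ X] {f : X → ℝ}
    (hf : IsAsymmSeminorm f) (hfnorm : ∀ x, f x ≤ ‖x‖) : Continuous f := by
  refine (LipschitzWith.of_le_add fun x y => ?_).continuous
  calc f x = f (y + (x - y)) := by rw [add_sub_cancel]
    _ ≤ f y + f (x - y) := hf.map_add_le _ _
    _ ≤ f y + dist x y := by rw [dist_eq_norm]; gcongr; exact hfnorm _

end IsAsymmSeminorm

lemma mul_sub_le_sub_of_hasSum {ι : Type*} {w a : ι → ℝ} {b s : ℝ} (hw : ∀ i, 0 ≤ w i)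
    (hw1 : HasSum w 1) (hb : ∀ i, b ≤ a i) (hs : HasSum (fun i => w i * a i) s) (i : ι) :
    w i * (a i - b) ≤ s - b := by
  have hsum : HasSum (fun i => w i * (a i - b)) (s - b) := by
    simpa only [mul_sub, one_mul] using hs.sub (hw1.mul_right b)
  exact le_hasSum hsum i fun j _ => mul_nonneg (hw j) (sub_nonneg.2 (hb j))

section Functionals

variable {X : Type*} [SeminormedAddCommGroup X] [NormedSpace ℝ X] {f : X → ℝ}

lemma norm_apply_le_of_le_norm {φ : X →ₗ[ℝ] ℝ} (hφ : ∀ x, φ x ≤ ‖x‖) (x : X) :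
    ‖φ x‖ ≤ ‖x‖ :=
  abs_le'.2 ⟨hφ x, by simpa using hφ (-x)⟩

lemma exists_hasSum_smul_of_le_norm {ι : Type*} {w : ι → ℝ} (hw : ∀ i, 0 ≤ w i) (hws : Summable w)
    {φ : ι → X →ₗ[ℝ] ℝ} (hφ : ∀ i x, φ i x ≤ ‖x‖) :
    ∃ ψ : X →L[ℝ] ℝ, ∀ x, HasSum (fun i => w i * φ i x) (ψ x) := by
  have hbound (i : ι) (x : X) : ‖φ i x‖ ≤ 1 * ‖x‖ := by
    simpa using norm_apply_le_of_le_norm (hφ i) x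
  let Φ (i : ι) : X →L[ℝ] ℝ := (φ i).mkContinuous 1 (hbound i)
  have hsum : Summable fun i => w i • Φ i := by
    refine hws.of_norm_bounded fun i => ?_
    rw [norm_smul, Real.norm_of_nonneg (hw i)]
    exact mul_le_of_le_one_right (hw i) ((φ i).mkContinuous_norm_le zero_le_one (hbound i))
  exact ⟨∑' i, w i • Φ i, fun x => hsum.hasSum.mapL (ContinuousLinearMap.apply ℝ ℝ x)⟩

theorem IsAsymmSeminorm.exists_functional_le_neg_unbounded (hf : IsAsymmSeminorm f)
    (hfnorm : ∀ x, f x ≤ ‖x‖) (hindex : ∀ ε > (0 : ℝ), ∃ x, f x = 1 ∧ f (-x) < ε) :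
    ∃ φ : X →L[ℝ] ℝ, (∀ x, φ x ≤ f x) ∧ ∀ C : ℝ, ∃ x, C * f (-x) < φ x := by
  let w (n : ℕ) : ℝ := 1 / 2 / 2 ^ n
  have hw (n : ℕ) : 0 < w n := by positivity
  have hw1 : HasSum w 1 := hasSum_geometric_two' 1
  choose x hx hx' using fun n : ℕ => hindex (w n / (n + 1)) (div_pos (hw n) n.cast_add_one_pos)
  choose φ hφf hφx using fun n => hf.exists_linearMap_le_apply_eq (x n)
  obtain ⟨ψ, hψ⟩ := exists_hasSum_smul_of_le_norm (fun n => (hw n).le) hw1.summable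
    fun n y => (hφf n y).trans (hfnorm y)
  refine ⟨ψ, fun y => ?_, fun C => ?_⟩
  · simpa using hasSum_le (fun n => mul_le_mul_of_nonneg_left (hφf n y) (hw n).le) (hψ y)
      (hw1.mul_right (f y))
  · obtain ⟨n, hn⟩ := exists_nat_ge C
    refine ⟨x n, ?_⟩
    have hsmall : f (-x n) * (n + 1) < w n := (lt_div_iff₀ n.cast_add_one_pos).1 (hx' n)
    have hφneg (m : ℕ) : -f (-x n) ≤ φ m (x n) := by
      simpa using neg_le_neg (hφf m (-x n))
    have hmean : w n * (1 + f (-x n)) ≤ ψ (x n) + f (-x n) := by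
      simpa only [hφx, hx, sub_neg_eq_add] using
        mul_sub_le_sub_of_hasSum (fun m => (hw m).le) hw1 hφneg (hψ (x n)) n
    calc C * f (-x n) ≤ n * f (-x n) := by gcongr; exact hf.nonneg _
      _ < w n - f (-x n) := by linarith
      _ ≤ w n * (1 + f (-x n)) - f (-x n) := by
        gcongr
        exact le_mul_of_one_le_right (hw n).le (le_add_of_nonneg_right (hf.nonneg _))
      _ ≤ ψ (x n) := sub_le_iff_le_add.2 hmean

end Functionals

/-- Boundedness of a map between asymmetric seminormed spaces. For linear maps this is membership
in the cone `L_c(X, Y)`; maps are not bundled here, so that `-(H + T)` is a pointwise operation. -/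
def IsAsymmBounded {X Y : Type*} (f : X → ℝ) (g : Y → ℝ) (T : X → Y) : Prop :=
  ∃ C ≥ (0 : ℝ), ∀ x, g (T x) ≤ C * f x

namespace IsAsymmBounded

lemma iff_exists_nat {X Y : Type*} {f : X → ℝ} {g : Y → ℝ} (hf : ∀ x, 0 ≤ f x) {T : X → Y} :
    IsAsymmBounded f g T ↔ ∃ n : ℕ, ∀ x, g (T x) ≤ n * f x := by
  constructor
  · rintro ⟨C, -, hC⟩
    obtain ⟨n, hn⟩ := exists_nat_ge C
    exact ⟨n, fun x => (hC x).trans (mul_le_mul_of_nonneg_right hn (hf x))⟩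
  · rintro ⟨n, hn⟩
    exact ⟨n, n.cast_nonneg, hn⟩

lemma isGδ_setOf_not {A X Y : Type*} [TopologicalSpace A] [TopologicalSpace Y]
    {f : X → ℝ} {g : Y → ℝ} (hf : ∀ x, 0 ≤ f x) (hg : Continuous g)
    {F : A → X → Y} (hF : ∀ x, Continuous fun a => F a x) :
    IsGδ {a | ¬ IsAsymmBounded f g (F a)} := by
  simp only [iff_exists_nat hf, not_exists, Set.ofPred_forall]
  refine IsGδ.iInter_of_isOpen fun n => ?_
  rw [← Set.compl_ofPred, isOpen_compl_iff, Set.ofPred_forall]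
  exact isClosed_iInter fun x => isClosed_le (hg.comp (hF x)) continuous_const

variable {X Y : Type*} [AddCommGroup Y] [Module ℝ Y] {f : X → ℝ} {g : Y → ℝ} {S T H : X → Y}

lemma add (hg : IsAsymmSeminorm g) (hS : IsAsymmBounded f g S) (hT : IsAsymmBounded f g T) :
    IsAsymmBounded f g (S + T) := by
  obtain ⟨C, hC, hS⟩ := hS
  obtain ⟨D, hD, hT⟩ := hT
  refine ⟨C + D, add_nonneg hC hD, fun x => ?_⟩
  calc g (S x + T x) ≤ g (S x) + g (T x) := hg.map_add_le _ _
    _ ≤ C * f x + D * f x := add_le_add (hS x) (hT x)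
    _ = (C + D) * f x := (add_mul ..).symm

lemma smul (hg : IsAsymmSeminorm g) {c : ℝ} (hc : 0 ≤ c) (hT : IsAsymmBounded f g T) :
    IsAsymmBounded f g (c • T) := by
  obtain ⟨C, hC, hT⟩ := hT
  refine ⟨c * C, mul_nonneg hc hC, fun x => ?_⟩
  rw [Pi.smul_apply, hg.map_smul c hc, mul_assoc]
  exact mul_le_mul_of_nonneg_left (hT x) hc

lemma not_neg_add_smul_add_smul (hg : IsAsymmSeminorm g) (hH : IsAsymmBounded f g H)
    (hT : IsAsymmBounded f g T) (hS : ¬ IsAsymmBounded f g (-S)) {a b : ℝ} (ha : 0 ≤ a)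
    (hb : 0 < b) : ¬ IsAsymmBounded f g (-(H + (a • T + b • S))) := by
  intro h
  have hbS : IsAsymmBounded f g (-(b • S)) := by
    convert add hg (add hg h hH) (smul hg ha hT) using 1
    abel
  apply hS
  convert smul hg (inv_nonneg.2 hb.le) hbS using 1
  rw [smul_neg, inv_smul_smul₀ hb.ne']

end IsAsymmBounded

/-- The closed asymmetric ball `B̄_r` of radius `r` around `0` in the space of continuous linear
maps from `(X, f)` to `(Y, g)`. -/
def asymmClosedBall {X Y : Type*} [AddCommGroup X] [Module ℝ X] [TopologicalSpace X]
    [AddCommGroup Y] [Module ℝ Y] [TopologicalSpace Y] (f : X → ℝ) (g : Y → ℝ) (r : ℝ) :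
    Set (X →L[ℝ] Y) :=
  {T | ∀ x, g (T x) ≤ r * f x}

theorem exists_mem_asymmClosedBall_neg_unbounded
    {X Y : Type*} [SeminormedAddCommGroup X] [NormedSpace ℝ X]
    [AddCommGroup Y] [Module ℝ Y] [TopologicalSpace Y] [ContinuousSMul ℝ Y]
    {f : X → ℝ} {g : Y → ℝ} (hf : IsAsymmSeminorm f) (hg : IsAsymmSeminorm g)
    (hfnorm : ∀ x, f x ≤ ‖x‖)
    (hindex : ∀ ε > (0 : ℝ), ∃ x, f x = 1 ∧ f (-x) < ε)
    {e : Y} (he : 0 < g e) (he' : g (-e) = 0) {r : ℝ} (hr : 0 < r) :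
    ∃ S : X →L[ℝ] Y, S ∈ asymmClosedBall f g r ∧ ¬ IsAsymmBounded f g (-⇑S) := by
  obtain ⟨φ, hφf, hφ⟩ := hf.exists_functional_le_neg_unbounded hfnorm hindex
  have hc : 0 ≤ r / g e := (div_pos hr he).le
  let u : Y := (r / g e) • e
  have hu : g u = r := by rw [hg.map_smul _ hc, div_mul_cancel₀ r he.ne']
  have hu' : g (-u) = 0 := by rw [← smul_neg, hg.map_smul _ hc, he', mul_zero]
  let S : X →L[ℝ] Y := φ.smulRight u
  have hS (x : X) : g (S x) = r * max (φ x) 0 := by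
    rw [ContinuousLinearMap.smulRight_apply, hg.map_smul_eq_max_mul hu', hu, mul_comm]
  refine ⟨S, fun x => ?_, ?_⟩
  · rw [hS]
    gcongr
    exact max_le (hφf x) (hf.nonneg x)
  · rintro ⟨C, -, hC⟩
    obtain ⟨x, hx⟩ := hφ (C / r)
    have hCx : r * φ x ≤ C * f (-x) := by
      calc r * φ x ≤ r * max (φ x) 0 := by gcongr; exact le_max_left _ _
        _ = g (-S (-x)) := by simp [hS]
        _ ≤ C * f (-x) := hC (-x)
    rw [div_mul_eq_mul_div, div_lt_iff₀' hr] at hx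
    exact hx.not_ge hCx

section Operators

variable {X Y : Type*} [AddCommGroup X] [Module ℝ X] [TopologicalSpace X]
  [AddCommGroup Y] [Module ℝ Y] [TopologicalSpace Y] [IsTopologicalAddGroup Y]
  [ContinuousConstSMul ℝ Y] {f : X → ℝ} {g : Y → ℝ}

lemma convex_asymmClosedBall (hg : IsAsymmSeminorm g) (r : ℝ) :
    Convex ℝ (asymmClosedBall f g r : Set (X →L[ℝ] Y)) := by
  intro T hT S hS a b ha hb hab x
  calc g (a • T x + b • S x) ≤ g (a • T x) + g (b • S x) := hg.map_add_le _ _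
    _ = a * g (T x) + b * g (S x) := by rw [hg.map_smul a ha, hg.map_smul b hb]
    _ ≤ a * (r * f x) + b * (r * f x) := by gcongr; exacts [hT x, hS x]
    _ = r * f x := by rw [← add_mul, hab, one_mul]

theorem openSegment_subset_asymmClosedBall_inter_unbounded (hg : IsAsymmSeminorm g)
    {H S T : X →L[ℝ] Y} (hH : IsAsymmBounded f g H) {r : ℝ} (hr : 0 ≤ r)
    (hT : T ∈ asymmClosedBall f g r) (hS : S ∈ asymmClosedBall f g r)
    (hSneg : ¬ IsAsymmBounded f g (-⇑S)) :
    openSegment ℝ T S ⊆ asymmClosedBall f g r ∩ {R | ¬ IsAsymmBounded f g (-(⇑H + ⇑R))} := by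
  refine Set.subset_inter ((convex_asymmClosedBall hg r).openSegment_subset hT hS) ?_
  rintro _ ⟨a, b, ha, hb, -, rfl⟩
  exact IsAsymmBounded.not_neg_add_smul_add_smul hg hH ⟨r, hr, hT⟩ hSneg ha.le hb

end Operators

theorem Gdelta_dense_of_index_zero_general
    {X Y : Type*} [SeminormedAddCommGroup X] [NormedSpace ℝ X]
    [AddCommGroup Y] [Module ℝ Y] [TopologicalSpace Y] [IsTopologicalAddGroup Y]
    [ContinuousSMul ℝ Y] {f : X → ℝ} {g : Y → ℝ} (hf : IsAsymmSeminorm f)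
    (hg : IsAsymmSeminorm g) (hfnorm : ∀ x, f x ≤ ‖x‖) (hgcont : Continuous g)
    (hindex : ∀ ε > (0 : ℝ), ∃ x, f x = 1 ∧ f (-x) < ε)
    {e : Y} (he : 0 < g e) (he' : g (-e) = 0)
    {H : X →L[ℝ] Y} (hH : IsAsymmBounded f g H) {r : ℝ} (hr : 0 < r) :
    IsGδ {T : asymmClosedBall f g r | ¬ IsAsymmBounded f g (-(⇑H + ⇑T.1))} ∧
    Dense {T : asymmClosedBall f g r | ¬ IsAsymmBounded f g (-(⇑H + ⇑T.1))} := by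
  refine ⟨IsAsymmBounded.isGδ_setOf_not hf.nonneg hgcont fun x => ?_, ?_⟩
  · simp only [Pi.neg_apply, Pi.add_apply]
    fun_prop
  · obtain ⟨S, hS, hSneg⟩ :=
      exists_mem_asymmClosedBall_neg_unbounded hf hg hfnorm hindex he he' hr
    refine Subtype.dense_iff.2 fun T hT => ?_
    have hseg := openSegment_subset_asymmClosedBall_inter_unbounded hg hH hr.le hT hS hSneg
    rw [← Subtype.image_preimage_coe] at hseg
    exact closure_mono hseg (segment_subset_closure_openSegment (left_mem_segment ℝ T S))

/-- If `c(X) = 0`, `Y` is a biBanach asymmetric space which is not T1 (there is `e`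
with `g e = 1`, `g (-e) = 0`), `H ∈ L_c(X,Y)` and `r > 0`, then inside the closed
asymmetric ball `B̄_r` (with the subspace topology of the operator norm) the set
`G(H) = {T ∈ B̄_r | -(H + T) ∉ L_c(X,Y)}` is a Gδ dense subset. -/
theorem Gdelta_dense_of_index_zero
    {X Y : Type*} [NormedAddCommGroup X] [NormedSpace ℝ X]
    [NormedAddCommGroup Y] [NormedSpace ℝ Y] [CompleteSpace Y]
    (f : X → ℝ) (g : Y → ℝ) (hf : IsAsymmNorm f) (hg : IsAsymmNorm g)
    (hXnorm : ∀ x : X, ‖x‖ = max (f x) (f (-x)))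
    (hYnorm : ∀ y : Y, ‖y‖ = max (g y) (g (-y)))
    (hcX : ∀ ε > (0 : ℝ), ∃ x : X, f x = 1 ∧ f (-x) < ε)
    (e : Y) (he : g e = 1) (he' : g (-e) = 0)
    (H : X →L[ℝ] Y) (hH : ∃ C ≥ (0 : ℝ), ∀ x, g (H x) ≤ C * f x)
    (r : ℝ) (hr : 0 < r) :
    IsGδ {T : {T : X →L[ℝ] Y // ∀ x, g (T x) ≤ r * f x} |
        ¬ ∃ C ≥ (0 : ℝ), ∀ x, g (-(H x + T.1 x)) ≤ C * f x} ∧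
    Dense {T : {T : X →L[ℝ] Y // ∀ x, g (T x) ≤ r * f x} |
        ¬ ∃ C ≥ (0 : ℝ), ∀ x, g (-(H x + T.1 x)) ≤ C * f x} := by
  have hfnorm (x : X) : f x ≤ ‖x‖ := (le_max_left _ _).trans_eq (hXnorm x).symm
  have hgnorm (y : Y) : g y ≤ ‖y‖ := (le_max_left _ _).trans_eq (hYnorm y).symm
  exact Gdelta_dense_of_index_zero_general hf.isAsymmSeminorm hg.isAsymmSeminorm hfnorm
    (hg.isAsymmSeminorm.continuous_of_le_norm hgnorm) hcX (he ▸ one_pos) he' hH hr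
end

section
/- Let (X, f) and (Y, g) be asymmetric normed spaces, each carrying the real normed space structure of its associated norm, with Y a complete normed space. Assume c(X) = 0, i.e., for every ε > 0 there exists x with f x = 1 and f (-x) < ε, and assume there exists e ∈ Y with g e = 1 and g (-e) = 0. Then L_c(X, Y) is not closed under negation: there exists a continuous linear map T : X →L[ℝ] Y with (∃ C ≥ 0, ∀ x, g (T x) ≤ C * f x) but ¬ (∃ C ≥ 0, ∀ x, g (-(T x)) ≤ C * f x). -/
open Filter Topology

/-- Sublinear functionals, i.e. subadditive and positively homogeneous functions. They are real
valued but may take negative values; this is the class of majorants in the Hahn–Banach theorem. -/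
structure IsSublinear {X : Type*} [AddCommGroup X] [Module ℝ X] (f : X → ℝ) : Prop where
  map_smul_of_nonneg : ∀ c : ℝ, 0 ≤ c → ∀ x, f (c • x) = c * f x
  map_add_le : ∀ x y, f (x + y) ≤ f x + f y

theorem IsAsymmNorm.isSublinear {X : Type*} [AddCommGroup X] [Module ℝ X] {f : X → ℝ}
    (hf : IsAsymmNorm f) : IsSublinear f :=
  ⟨hf.2.1, hf.2.2.1⟩

namespace IsSublinear

variable {X : Type*} [AddCommGroup X] [Module ℝ X] {f : X → ℝ}

theorem map_zero (hf : IsSublinear f) : f 0 = 0 := by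
  simpa using hf.map_smul_of_nonneg 0 le_rfl 0

theorem neg_map_neg_le (hf : IsSublinear f) (x : X) : -f (-x) ≤ f x := by
  have h := hf.map_add_le x (-x)
  rw [add_neg_cancel, hf.map_zero] at h
  linarith

theorem mul_map_le_map_smul (hf : IsSublinear f) (c : ℝ) (x : X) : c * f x ≤ f (c • x) := by
  rcases le_total 0 c with hc | hc
  · exact (hf.map_smul_of_nonneg c hc x).ge
  · calc c * f x = -f (-(c • x)) := by
          rw [← neg_smul, hf.map_smul_of_nonneg _ (neg_nonneg.2 hc), neg_mul, neg_neg]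
      _ ≤ f (c • x) := hf.neg_map_neg_le _

theorem exists_linearMap_le_and_eq (hf : IsSublinear f) (z : X) :
    ∃ q : X →ₗ[ℝ] ℝ, (∀ x, q x ≤ f x) ∧ q z = f z := by
  have hz : ∀ c : ℝ, c • z = 0 → c • f z = 0 := fun c hc => by
    rcases smul_eq_zero.1 hc with rfl | rfl
    · exact zero_smul ℝ _
    · rw [hf.map_zero, smul_zero]
  let q₀ : X →ₗ.[ℝ] ℝ := LinearPMap.mkSpanSingleton' z (f z) hz
  have hq₀ : ∀ x : q₀.domain, q₀ x ≤ f x := by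
    rintro ⟨x, hx⟩
    obtain ⟨c, rfl⟩ := Submodule.mem_span_singleton.1 hx
    exact (LinearPMap.mkSpanSingleton'_apply z (f z) hz c hx).trans_le (hf.mul_map_le_map_smul c z)
  obtain ⟨q, hq_ext, hq_le⟩ := exists_extension_of_le_sublinear q₀ f
    (fun c hc => hf.map_smul_of_nonneg c hc.le) hf.map_add_le hq₀
  exact ⟨q, hq_le, (hq_ext ⟨z, Submodule.mem_span_singleton_self z⟩).trans
    (LinearPMap.mkSpanSingleton'_apply_self z (f z) hz _)⟩

end IsSublinear

theorem exists_linearMap_hasSum {ι R M N : Type*} [Semiring R] [AddCommMonoid M] [Module R M]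
    [AddCommMonoid N] [Module R N] [TopologicalSpace N] [T2Space N] [ContinuousAdd N]
    [ContinuousConstSMul R N] {q : ι → M →ₗ[R] N} (hq : ∀ x, Summable fun i => q i x) :
    ∃ p : M →ₗ[R] N, ∀ x, HasSum (fun i => q i x) (p x) := by
  choose p hp using hq
  refine ⟨{ toFun := p, map_add' := fun x y => ?_, map_smul' := fun c x => ?_ }, hp⟩
  · exact (hp (x + y)).unique (by simpa only [map_add] using (hp x).add (hp y))
  · exact (hp (c • x)).unique
      (by simpa only [map_smul, RingHom.id_apply] using (hp x).const_smul c)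

section DominatedFunctionals

variable {X : Type*} [AddCommGroup X] [Module ℝ X] {f : X → ℝ}

theorem exists_linearMap_le_and_mul_sub_le_sub {ι : Type*} {q : ι → X →ₗ[ℝ] ℝ} {t : ι → ℝ}
    (hq : ∀ i x, q i x ≤ f x) (ht : ∀ i, 0 ≤ t i) (ht_sum : HasSum t 1) :
    ∃ p : X →ₗ[ℝ] ℝ, (∀ x, p x ≤ f x) ∧ ∀ i x, t i * (f x - q i x) ≤ f x - p x := by
  have hq_abs : ∀ i x, |q i x| ≤ max (f x) (f (-x)) := fun i x =>
    abs_le'.2 ⟨(hq i x).trans (le_max_left _ _),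
      (map_neg (q i) x).ge.trans ((hq i (-x)).trans (le_max_right _ _))⟩
  have hq_summable : ∀ x, Summable fun i => (t i • q i) x := fun x =>
    (ht_sum.summable.mul_right (max (f x) (f (-x)))).of_norm_bounded fun i => by
      rw [LinearMap.smul_apply, norm_smul, Real.norm_of_nonneg (ht i), Real.norm_eq_abs]
      exact mul_le_mul_of_nonneg_left (hq_abs i x) (ht i)
  obtain ⟨p, hp⟩ := exists_linearMap_hasSum hq_summable
  have hterm : ∀ i x, 0 ≤ t i * (f x - q i x) := fun i x =>
    mul_nonneg (ht i) (sub_nonneg.2 (hq i x))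
  have hsub : ∀ x, HasSum (fun i => t i * (f x - q i x)) (f x - p x) := fun x => by
    simpa only [mul_sub, one_mul, LinearMap.smul_apply, smul_eq_mul] using
      (ht_sum.mul_right (f x)).sub (hp x)
  exact ⟨p, fun x => sub_nonneg.1 ((hsub x).nonneg fun i => hterm i x),
    fun i x => le_hasSum (hsub x) i fun j _ => hterm j x⟩

theorem IsSublinear.exists_linearMap_le_and_not_neg_le_mul (hf : IsSublinear f)
    (hf_nonneg : ∀ x, 0 ≤ f x) (hf_neg : ¬ ∃ C ≥ (0 : ℝ), ∀ x, f (-x) ≤ C * f x) :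
    ∃ p : X →ₗ[ℝ] ℝ, (∀ x, p x ≤ f x) ∧ ¬ ∃ C ≥ (0 : ℝ), ∀ x, -p x ≤ C * f x := by
  push Not at hf_neg
  choose y hy using fun n : ℕ => hf_neg (2 ^ (2 * n + 1)) (by positivity)
  choose q hq_le hq_eq using fun n => hf.exists_linearMap_le_and_eq (-y n)
  obtain ⟨p, hp_le, hp_sub⟩ := exists_linearMap_le_and_mul_sub_le_sub hq_le
    (fun n => by positivity) (hasSum_geometric_two' 1)
  refine ⟨p, hp_le, fun ⟨C, _, hC⟩ => ?_⟩
  obtain ⟨n, hn⟩ := pow_unbounded_of_one_lt (C + 1) one_lt_two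
  have hbound : 1 / 2 / 2 ^ n * f (-y n) ≤ 2 ^ n * f (y n) :=
    calc 1 / 2 / 2 ^ n * f (-y n) ≤ 1 / 2 / 2 ^ n * (f (y n) - q n (y n)) := by
          rw [← hq_eq, map_neg]
          gcongr
          linarith [hf_nonneg (y n)]
      _ ≤ f (y n) - p (y n) := hp_sub n (y n)
      _ ≤ (C + 1) * f (y n) := by linarith [hC (y n)]
      _ ≤ 2 ^ n * f (y n) := mul_le_mul_of_nonneg_right hn.le (hf_nonneg _)
  refine (hy n).not_ge ?_
  calc f (-y n) = 2 * 2 ^ n * (1 / 2 / 2 ^ n * f (-y n)) := by field_simp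
    _ ≤ 2 * 2 ^ n * (2 ^ n * f (y n)) := by gcongr
    _ = 2 ^ (2 * n + 1) * f (y n) := by ring

theorem continuous_of_linearMap_le [TopologicalSpace X] [IsTopologicalAddGroup X]
    {p : X →ₗ[ℝ] ℝ} (hpf : ∀ x, p x ≤ f x) (hf_zero : f 0 = 0) (hf_cont : ContinuousAt f 0) :
    Continuous p := by
  have hf_tendsto : Tendsto f (𝓝 0) (𝓝 0) := by simpa only [hf_zero] using hf_cont.tendsto
  have hneg_tendsto : Tendsto (fun x => -f (-x)) (𝓝 0) (𝓝 0) := by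
    have h : Tendsto (fun x : X => -x) (𝓝 0) (𝓝 0) := by
      simpa only [neg_zero] using (continuous_neg (G := X)).tendsto 0
    simpa only [neg_zero, Function.comp_def] using (hf_tendsto.comp h).neg
  refine continuous_of_tendsto_nhds_zero p <|
    tendsto_of_tendsto_of_tendsto_of_le_of_le hneg_tendsto hf_tendsto (fun x => ?_) hpf
  exact neg_le.1 ((map_neg p x).ge.trans (hpf (-x)))

end DominatedFunctionals

theorem map_smul_eq_max_mul {Y : Type*} [AddCommGroup Y] [Module ℝ Y] {g : Y → ℝ}
    (hg : ∀ c : ℝ, 0 ≤ c → ∀ y, g (c • y) = c * g y) {e : Y} (he : g (-e) = 0) (c : ℝ) :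
    g (c • e) = max c 0 * g e := by
  rcases le_total 0 c with hc | hc
  · rw [hg c hc, max_eq_left hc]
  · rw [← neg_smul_neg, hg _ (neg_nonneg.2 hc), he, max_eq_right hc, mul_zero, zero_mul]

theorem continuousAt_zero_of_nonneg_of_le_norm {E : Type*} [SeminormedAddCommGroup E] {f : E → ℝ}
    (hf_nonneg : ∀ x, 0 ≤ f x) (hf_le : ∀ x, f x ≤ ‖x‖) : ContinuousAt f 0 := by
  have hf_zero : f 0 = 0 := le_antisymm ((hf_le 0).trans_eq norm_zero) (hf_nonneg 0)
  rw [ContinuousAt, hf_zero]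
  exact squeeze_zero hf_nonneg hf_le tendsto_norm_zero

theorem not_exists_map_neg_le_mul_of_index_zero {X : Type*} [InvolutiveNeg X] {f : X → ℝ}
    (hf : ∀ ε > (0 : ℝ), ∃ x : X, f x = 1 ∧ f (-x) < ε) :
    ¬ ∃ C ≥ (0 : ℝ), ∀ x, f (-x) ≤ C * f x := by
  rintro ⟨C, hC, hle⟩
  obtain ⟨x, hx, hx_neg⟩ := hf (C + 1)⁻¹ (by positivity)
  have : (1 : ℝ) < 1 :=
    calc 1 = f (- -x) := by rw [neg_neg, hx]
      _ ≤ C * f (-x) := hle (-x)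
      _ ≤ C * (C + 1)⁻¹ := mul_le_mul_of_nonneg_left hx_neg.le hC
      _ < 1 := by rw [← div_eq_mul_inv, div_lt_one (by positivity)]; exact lt_add_one C
  exact lt_irrefl _ this

theorem Lc_not_vector_space_of_index_zero_general {X Y : Type*}
    [AddCommGroup X] [Module ℝ X] [TopologicalSpace X] [IsTopologicalAddGroup X]
    [AddCommGroup Y] [Module ℝ Y] [TopologicalSpace Y] [ContinuousSMul ℝ Y]
    {f : X → ℝ} {g : Y → ℝ} (hf : IsSublinear f) (hf_nonneg : ∀ x, 0 ≤ f x)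
    (hf_cont : ContinuousAt f 0) (hf_neg : ¬ ∃ C ≥ (0 : ℝ), ∀ x, f (-x) ≤ C * f x)
    (hg : ∀ c : ℝ, 0 ≤ c → ∀ y, g (c • y) = c * g y)
    {e : Y} (he : 0 < g e) (he' : g (-e) = 0) :
    ∃ T : X →L[ℝ] Y, (∃ C ≥ (0 : ℝ), ∀ x, g (T x) ≤ C * f x) ∧
      ¬ (∃ C ≥ (0 : ℝ), ∀ x, g (-(T x)) ≤ C * f x) := by
  obtain ⟨p, hp_le, hp_neg⟩ := hf.exists_linearMap_le_and_not_neg_le_mul hf_nonneg hf_neg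
  let φ : X →L[ℝ] ℝ := ⟨p, continuous_of_linearMap_le hp_le hf.map_zero hf_cont⟩
  refine ⟨φ.smulRight e, ⟨g e, he.le, fun x => ?_⟩, fun ⟨C, hC, hT⟩ => hp_neg
    ⟨C / g e, div_nonneg hC he.le, fun x => ?_⟩⟩
  · calc g (p x • e) = max (p x) 0 * g e := map_smul_eq_max_mul hg he' _
      _ ≤ f x * g e := mul_le_mul_of_nonneg_right (max_le (hp_le x) (hf_nonneg x)) he.le
      _ = g e * f x := mul_comm _ _
  · rw [div_mul_eq_mul_div, le_div_iff₀ he]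
    calc -p x * g e ≤ max (-p x) 0 * g e :=
          mul_le_mul_of_nonneg_right (le_max_left _ _) he.le
      _ = g (-(p x • e)) := by rw [← neg_smul, map_smul_eq_max_mul hg he']
      _ ≤ C * f x := hT x

/-- If `c(X) = 0` and `Y` is a biBanach asymmetric space which is not T1, then
`L_c(X,Y)` is not closed under negation: there is `T ∈ L_c(X,Y)` with
`-T ∉ L_c(X,Y)`. -/
theorem Lc_not_vector_space_of_index_zero
    {X Y : Type*} [NormedAddCommGroup X] [NormedSpace ℝ X]
    [NormedAddCommGroup Y] [NormedSpace ℝ Y] [CompleteSpace Y]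
    (f : X → ℝ) (g : Y → ℝ) (hf : IsAsymmNorm f) (hg : IsAsymmNorm g)
    (hXnorm : ∀ x : X, ‖x‖ = max (f x) (f (-x)))
    (hYnorm : ∀ y : Y, ‖y‖ = max (g y) (g (-y)))
    (hcX : ∀ ε > (0 : ℝ), ∃ x : X, f x = 1 ∧ f (-x) < ε)
    (e : Y) (he : g e = 1) (he' : g (-e) = 0) :
    ∃ T : X →L[ℝ] Y, (∃ C ≥ (0 : ℝ), ∀ x, g (T x) ≤ C * f x) ∧
      ¬ (∃ C ≥ (0 : ℝ), ∀ x, g (-(T x)) ≤ C * f x) :=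
  Lc_not_vector_space_of_index_zero_general hf.isSublinear hf.1
    (continuousAt_zero_of_nonneg_of_le_norm hf.1 fun x => hXnorm x ▸ le_max_left _ _)
    (not_exists_map_neg_le_mul_of_index_zero hcX) hg.2.1 (he ▸ one_pos) he'
end

section
/- Let (X, f) and (Y, g) be asymmetric normed spaces, each carrying the real normed space structure of its associated norm, with Y a complete normed space. Assume c(X) = 0 (for every ε > 0 there exists x with f x = 1 and f (-x) < ε) and that there exists e ∈ Y with g e = 1 and g (-e) = 0. Then the set L_c(X, Y) ∩ (-L_c(X, Y)) = {T : X →L[ℝ] Y | (∃ C ≥ 0, ∀ x, g (T x) ≤ C * f x) ∧ (∃ C ≥ 0, ∀ x, g (-(T x)) ≤ C * f x)} is meagre (of first Baire category) in X →L[ℝ] Y with the operator-norm topology. -/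
open Metric Set

section WeightedUniformBoundedness

variable {𝕜 E F ι : Type*} [NontriviallyNormedField 𝕜]
  [SeminormedAddCommGroup E] [NormedSpace 𝕜 E] [SeminormedAddCommGroup F] [NormedSpace 𝕜 F]

lemma opNorm_le_of_forall_mem_ball {u : E →L[𝕜] F} {x₀ : E} {r K : ℝ} {c : 𝕜} (hr : 0 < r)
    (hc : 1 < ‖c‖) (hu : ∀ x ∈ ball x₀ r, ‖u x‖ ≤ K) : ‖u‖ ≤ 2 * ‖c‖ / r * K := by
  have hK : 0 ≤ K := (norm_nonneg _).trans (hu x₀ (mem_ball_self hr))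
  refine u.opNorm_le_of_shell hr (by positivity) hc fun z hz hzr ↦ ?_
  have hz' : 1 ≤ ‖c‖ / r * ‖z‖ := by
    rw [div_le_iff₀ (by positivity)] at hz
    rw [div_mul_eq_mul_div, one_le_div hr]
    linarith
  calc ‖u z‖ = ‖u (x₀ + z) - u x₀‖ := by rw [map_add, add_sub_cancel_left]
    _ ≤ ‖u (x₀ + z)‖ + ‖u x₀‖ := norm_sub_le _ _
    _ ≤ K + K := add_le_add (hu _ (by simpa using hzr)) (hu _ (mem_ball_self hr))
    _ = 2 * K * 1 := by ring
    _ ≤ 2 * K * (‖c‖ / r * ‖z‖) := by gcongr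
    _ = 2 * ‖c‖ / r * K * ‖z‖ := by ring

lemma isNowhereDense_setOf_forall_norm_apply_le {u : ι → E →L[𝕜] F} {p : ι → ℝ}
    (hu : ¬∃ C, ∀ i, ‖u i‖ ≤ C * p i) : IsNowhereDense {x | ∀ i, ‖u i x‖ ≤ p i} := by
  have hclosed : IsClosed {x | ∀ i, ‖u i x‖ ≤ p i} := by
    simp only [ofPred_forall]
    exact isClosed_iInter fun i ↦ isClosed_le (by fun_prop) continuous_const
  rw [hclosed.isNowhereDense_iff, eq_empty_iff_forall_notMem]
  intro x₀ hx₀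
  obtain ⟨r, hr, hball⟩ := Metric.mem_nhds_iff.1 (mem_interior_iff_mem_nhds.1 hx₀)
  obtain ⟨c, hc⟩ := NormedField.exists_one_lt_norm 𝕜
  exact hu ⟨2 * ‖c‖ / r, fun i ↦ opNorm_le_of_forall_mem_ball hr hc fun x hx ↦ hball hx i⟩

theorem isMeagre_setOf_exists_forall_norm_apply_le_mul {u : ι → E →L[𝕜] F} {p : ι → ℝ}
    (hp : ∀ i, 0 ≤ p i) (hu : ¬∃ C, ∀ i, ‖u i‖ ≤ C * p i) :
    IsMeagre {x | ∃ C, ∀ i, ‖u i x‖ ≤ C * p i} := by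
  have hmeagre : IsMeagre (⋃ n : ℕ, {x | ∀ i, ‖u i x‖ ≤ n * p i}) := by
    refine isMeagre_iUnion fun n ↦ (isNowhereDense_setOf_forall_norm_apply_le ?_).isMeagre
    rintro ⟨C, hC⟩
    exact hu ⟨C * n, fun i ↦ (hC i).trans_eq (mul_assoc ..).symm⟩
  refine hmeagre.mono ?_
  rintro x ⟨C, hC⟩
  obtain ⟨n, hn⟩ := exists_nat_ge C
  exact mem_iUnion.2 ⟨n, fun i ↦ (hC i).trans (mul_le_mul_of_nonneg_right hn (hp i))⟩

end WeightedUniformBoundedness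

section Evaluation

variable {𝕜 E F : Type*} [RCLike 𝕜] [SeminormedAddCommGroup E] [NormedSpace 𝕜 E]
  [NormedAddCommGroup F] [NormedSpace 𝕜 F] [Nontrivial F]

lemma opNorm_apply_eq_norm (x : E) : ‖ContinuousLinearMap.apply 𝕜 F x‖ = ‖x‖ := by
  refine ContinuousLinearMap.opNorm_eq_of_bounds (norm_nonneg x)
    (fun T ↦ (T.le_opNorm x).trans_eq (mul_comm ..)) fun N hN hbound ↦ ?_
  obtain ⟨φ, hφ, hφx⟩ := exists_dual_vector'' 𝕜 x
  obtain ⟨e, he⟩ := exists_ne (0 : F)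
  have hrankOne : ‖x‖ * ‖e‖ ≤ N * (‖φ‖ * ‖e‖) := by
    simpa [hφx, norm_smul] using hbound (φ.smulRight e)
  have hle : ‖x‖ * ‖e‖ ≤ N * ‖e‖ := hrankOne.trans <| by
    gcongr
    exact mul_le_of_le_one_left (norm_nonneg e) hφ
  exact le_of_mul_le_mul_right hle (norm_pos_iff.2 he)

theorem isMeagre_setOf_exists_norm_apply_le_mul {p : E → ℝ} (hp : ∀ x, 0 ≤ p x)
    (hnorm : ¬∃ C, ∀ x, ‖x‖ ≤ C * p x) :
    IsMeagre {T : E →L[𝕜] F | ∃ C, ∀ x, ‖T x‖ ≤ C * p x} :=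
  isMeagre_setOf_exists_forall_norm_apply_le_mul (u := ContinuousLinearMap.apply 𝕜 F) hp
    (by simpa only [opNorm_apply_eq_norm] using hnorm)

end Evaluation

lemma not_exists_norm_le_mul {X : Type*} [SeminormedAddCommGroup X] {f : X → ℝ}
    (hf : ∀ x, 0 ≤ f x) (hfnorm : ∀ x, f x ≤ ‖x‖)
    (hc : ∀ ε > (0 : ℝ), ∃ x : X, f x = 1 ∧ f (-x) < ε) : ¬∃ C, ∀ x, ‖x‖ ≤ C * f x := by
  rintro ⟨C, hC⟩
  obtain ⟨x, hx, hnegx⟩ := hc (|C| + 1)⁻¹ (by positivity)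
  have : (1 : ℝ) < 1 :=
    calc 1 = f x := hx.symm
      _ ≤ ‖-x‖ := (hfnorm x).trans_eq (norm_neg x).symm
      _ ≤ C * f (-x) := hC (-x)
      _ ≤ (|C| + 1) * f (-x) := by
        gcongr
        · exact hf (-x)
        · linarith [le_abs_self C]
      _ < (|C| + 1) * (|C| + 1)⁻¹ := by gcongr
      _ = 1 := mul_inv_cancel₀ (by positivity)
  exact this.false

lemma IsAsymmNorm.map_zero_s15 {X : Type*} [AddCommGroup X] [Module ℝ X] {f : X → ℝ}
    (hf : IsAsymmNorm f) : f 0 = 0 := by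
  simpa using hf.2.1 0 le_rfl 0

theorem Lc_inter_neg_Lc_meagre_general
    {X Y : Type*} [NormedAddCommGroup X] [NormedSpace ℝ X]
    [NormedAddCommGroup Y] [NormedSpace ℝ Y]
    (f : X → ℝ) (g : Y → ℝ) (hf : IsAsymmNorm f) (hg : IsAsymmNorm g)
    (hXnorm : ∀ x : X, ‖x‖ = max (f x) (f (-x)))
    (hYnorm : ∀ y : Y, ‖y‖ = max (g y) (g (-y)))
    (hcX : ∀ ε > (0 : ℝ), ∃ x : X, f x = 1 ∧ f (-x) < ε)
    (e : Y) (he : g e ≠ 0) :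
    IsMeagre {T : X →L[ℝ] Y |
      (∃ C ≥ (0 : ℝ), ∀ x, g (T x) ≤ C * f x) ∧
      (∃ C ≥ (0 : ℝ), ∀ x, g (-(T x)) ≤ C * f x)} := by
  have hf_nonneg : ∀ x, 0 ≤ f x := hf.1
  have : Nontrivial Y := nontrivial_of_ne e 0 fun h ↦ he (h ▸ hg.map_zero_s15)
  have hnorm : ¬∃ C, ∀ x, ‖x‖ ≤ C * f x :=
    not_exists_norm_le_mul hf_nonneg (fun x ↦ (hXnorm x).ge.trans' (le_max_left _ _)) hcX
  refine (isMeagre_setOf_exists_norm_apply_le_mul hf_nonneg hnorm).mono ?_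
  rintro T ⟨⟨C, -, hC⟩, ⟨D, -, hD⟩⟩
  refine ⟨max C D, fun x ↦ ?_⟩
  rw [hYnorm, max_mul_of_nonneg _ _ (hf_nonneg x)]
  exact max_le_max (hC x) (hD x)

/-- If `c(X) = 0` and `Y` is a biBanach asymmetric space which is not T1, then
`L_c(X,Y) ∩ (-L_c(X,Y))` is meagre in `X →L[ℝ] Y` for the operator-norm topology. -/
theorem Lc_inter_neg_Lc_meagre
    {X Y : Type*} [NormedAddCommGroup X] [NormedSpace ℝ X]
    [NormedAddCommGroup Y] [NormedSpace ℝ Y] [CompleteSpace Y]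
    (f : X → ℝ) (g : Y → ℝ) (hf : IsAsymmNorm f) (hg : IsAsymmNorm g)
    (hXnorm : ∀ x : X, ‖x‖ = max (f x) (f (-x)))
    (hYnorm : ∀ y : Y, ‖y‖ = max (g y) (g (-y)))
    (hcX : ∀ ε > (0 : ℝ), ∃ x : X, f x = 1 ∧ f (-x) < ε)
    (e : Y) (he : g e = 1) (he' : g (-e) = 0) :
    IsMeagre {T : X →L[ℝ] Y |
      (∃ C ≥ (0 : ℝ), ∀ x, g (T x) ≤ C * f x) ∧
      (∃ C ≥ (0 : ℝ), ∀ x, g (-(T x)) ≤ C * f x)} := by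
  exact Lc_inter_neg_Lc_meagre_general f g hf hg hXnorm hYnorm hcX e (by simp [he])
end

section
/- Let X be a nontrivial real vector space, f an asymmetric norm on X with f x > 0 for every x ≠ 0 (X is T1), and let X carry the real normed space structure of the associated norm ‖x‖ = max (f x) (f (-x)). Then the dual cone X^♭ := {p : X →L[ℝ] ℝ | ∃ C ≥ 0, ∀ x, p x ≤ C * f x} is weak-star closed in the weak-star dual of X if and only if sInf {f (-x) : x ∈ X, f x = 1} > 0. -/
/-- The dual cone `X^♭` of `f`: the continuous functionals bounded above by a multiple of `f`,
as a subset of the weak-star dual. -/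
def dualCone {X : Type*} [NormedAddCommGroup X] [NormedSpace ℝ X] (f : X → ℝ) :
    Set (WeakDual ℝ X) :=
  {p | ∃ C ≥ (0 : ℝ), ∀ x, p x ≤ C * f x}

/-- The index of symmetry `c(X)` of `f`. As the infimum of the empty set of reals, it is `0` if `f`
does not attain the value `1`. -/
noncomputable def symmetryIndex {X : Type*} [Neg X] (f : X → ℝ) : ℝ :=
  sInf ((fun x => f (-x)) '' {x | f x = 1})

theorem weakDual_dense_of_forall_finset_eqOn {𝕜 E : Type*} [CommSemiring 𝕜] [TopologicalSpace 𝕜]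
    [ContinuousAdd 𝕜] [ContinuousConstSMul 𝕜 𝕜] [AddCommMonoid E] [Module 𝕜 E]
    [TopologicalSpace E] {S : Set (WeakDual 𝕜 E)}
    (h : ∀ (p : WeakDual 𝕜 E) (s : Finset E), ∃ q ∈ S, Set.EqOn q p s) : Dense S := by
  intro p
  choose q hqS hqp using h p
  have hlim : Filter.Tendsto q Filter.atTop (nhds p) := by
    refine tendsto_iff_forall_eval_tendsto_topDualPairing.2 fun x => tendsto_const_nhds.congr' ?_
    filter_upwards [Filter.eventually_ge_atTop {x}] with s hs
    exact (hqp s (hs (Finset.mem_singleton_self x))).symm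
  exact mem_closure_of_tendsto hlim (Filter.Eventually.of_forall hqS)

theorem exists_norm_le_mul_of_posHomogeneous {E : Type*} [NormedAddCommGroup E] [NormedSpace ℝ E]
    [ProperSpace E] {g : E → ℝ} (hcont : Continuous g)
    (hsmul : ∀ c : ℝ, 0 ≤ c → ∀ x, g (c • x) = c * g x) (hpos : ∀ x, x ≠ 0 → 0 < g x) :
    ∃ K > 0, ∀ x, ‖x‖ ≤ K * g x := by
  have hinv : ContinuousOn (fun x => (g x)⁻¹) (Metric.sphere 0 1) :=
    hcont.continuousOn.inv₀ fun x hx => (hpos x (ne_zero_of_mem_unit_sphere ⟨x, hx⟩)).ne'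
  obtain ⟨K, hK⟩ := (isCompact_sphere (0 : E) 1).exists_bound_of_continuousOn hinv
  refine ⟨max K 1, by positivity, fun x => ?_⟩
  rcases eq_or_ne x 0 with rfl | hx
  · have hg0 : g 0 = 0 := by simpa using hsmul 0 le_rfl 0
    simp [hg0]
  have hmem : ‖x‖⁻¹ • x ∈ Metric.sphere (0 : E) 1 := by
    simpa using norm_smul_inv_norm (𝕜 := ℝ) hx
  have hratio : ‖x‖ / g x ≤ K := by
    simpa [hsmul, div_eq_inv_mul] using (le_abs_self _).trans (hK _ hmem)
  exact (div_le_iff₀ (hpos x hx)).1 (hratio.trans (le_max_left K 1))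

theorem exists_norm_le_mul_of_forall_dual {𝕜 E : Type*} [RCLike 𝕜] [NormedAddCommGroup E]
    [NormedSpace 𝕜 E] {f : E → ℝ} (hf : ∀ x, 0 ≤ f x)
    (h : ∀ p : StrongDual 𝕜 E, ∃ C, ∀ x, ‖p x‖ ≤ C * f x) :
    ∃ K > 0, ∀ x, ‖x‖ ≤ K * f x := by
  let evalAt (x : {x : E // 0 < f x}) : StrongDual 𝕜 (StrongDual 𝕜 E) :=
    NormedSpace.inclusionInDoubleDual 𝕜 E (((f x)⁻¹ : 𝕜) • (x : E))
  have hnorm_inv (x : E) : ‖((f x)⁻¹ : 𝕜)‖ = (f x)⁻¹ := by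
    rw [norm_inv, RCLike.norm_of_nonneg (hf x)]
  obtain ⟨K, hK⟩ := banach_steinhaus (g := evalAt) fun p => by
    obtain ⟨C, hC⟩ := h p
    refine ⟨C, fun x => ?_⟩
    rw [NormedSpace.dual_def, map_smul, norm_smul, hnorm_inv, inv_mul_eq_div, div_le_iff₀ x.2]
    exact hC x
  refine ⟨max K 1, by positivity, fun x => ?_⟩
  rcases (hf x).eq_or_lt with hx | hx
  · have hx0 : x = 0 := SeparatingDual.eq_zero_of_forall_dual_eq_zero (R := 𝕜) fun p => by
      obtain ⟨C, hC⟩ := h p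
      simpa [← hx] using hC x
    rw [← hx, hx0, norm_zero, mul_zero]
  · have hratio : ‖x‖ / f x ≤ K := by
      rw [← inv_mul_eq_div, ← hnorm_inv, ← norm_smul,
        ← (NormedSpace.inclusionInDoubleDualLi 𝕜 (E := E)).norm_map]
      exact hK ⟨x, hx⟩
    exact (div_le_iff₀ hx).1 (hratio.trans (le_max_left K 1))

theorem dualCone_eq_univ_iff {X : Type*} [NormedAddCommGroup X] [NormedSpace ℝ X] {f : X → ℝ}
    (hf : ∀ x, 0 ≤ f x) :
    dualCone f = Set.univ ↔ ∃ K > 0, ∀ x, ‖x‖ ≤ K * f x := by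
  rw [Set.eq_univ_iff_forall]
  constructor
  · refine fun h => exists_norm_le_mul_of_forall_dual (𝕜 := ℝ) hf fun p => ?_
    obtain ⟨C, -, hC⟩ := h p.toWeakDual
    obtain ⟨D, -, hD⟩ := h (-p).toWeakDual
    refine ⟨max C D, fun x => abs_le'.2 ⟨(hC x).trans ?_, (hD x).trans ?_⟩⟩
    · exact mul_le_mul_of_nonneg_right (le_max_left C D) (hf x)
    · exact mul_le_mul_of_nonneg_right (le_max_right C D) (hf x)
  · rintro ⟨K, hK, hbound⟩ p
    refine ⟨‖p.toStrongDual‖ * K, by positivity, fun x => ?_⟩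
    calc
      p x ≤ ‖p.toStrongDual‖ * ‖x‖ := (le_abs_self _).trans (p.toStrongDual.le_opNorm x)
      _ ≤ ‖p.toStrongDual‖ * (K * f x) := by gcongr; exact hbound x
      _ = ‖p.toStrongDual‖ * K * f x := (mul_assoc ..).symm

namespace IsAsymmNorm

section Module

variable {X : Type*} [AddCommGroup X] [Module ℝ X] {f : X → ℝ}

theorem map_inv_smul_self (hf : IsAsymmNorm f) {x : X} (hx : 0 < f x) : f ((f x)⁻¹ • x) = 1 := by
  rw [hf.2.1 _ (inv_nonneg.2 hx.le), inv_mul_cancel₀ hx.ne']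

theorem le_symmetryIndex_iff [Nontrivial X] (hf : IsAsymmNorm f) (hT1 : ∀ x, x ≠ 0 → 0 < f x)
    {a : ℝ} : a ≤ symmetryIndex f ↔ ∀ x, a * f x ≤ f (-x) := by
  obtain ⟨y, hy⟩ := exists_ne (0 : X)
  have hbdd : BddBelow ((fun x => f (-x)) '' {x | f x = 1}) :=
    ⟨0, Set.forall_mem_image.2 fun x _ => hf.1 (-x)⟩
  have hne : ((fun x => f (-x)) '' {x | f x = 1}).Nonempty :=
    ⟨_, Set.mem_image_of_mem _ (hf.map_inv_smul_self (hT1 y hy))⟩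
  rw [symmetryIndex, le_csInf_iff hbdd hne, Set.forall_mem_image]
  refine ⟨fun h x => ?_, fun h x hx => by simpa [show f x = 1 from hx] using h x⟩
  rcases (hf.1 x).eq_or_lt with hx | hx
  · simpa [← hx] using hf.1 (-x)
  · have hscaled := h (hf.map_inv_smul_self hx)
    rwa [← smul_neg, hf.2.1 _ (inv_nonneg.2 hx.le), inv_mul_eq_div, le_div_iff₀ hx] at hscaled

end Module

variable {X : Type*} [NormedAddCommGroup X] [NormedSpace ℝ X] {f : X → ℝ}

theorem symmetryIndex_pos_iff [Nontrivial X] (hf : IsAsymmNorm f)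
    (hnorm : ∀ x, ‖x‖ = max (f x) (f (-x))) (hT1 : ∀ x, x ≠ 0 → 0 < f x) :
    0 < symmetryIndex f ↔ ∃ K > 0, ∀ x, ‖x‖ ≤ K * f x := by
  constructor
  · intro hc
    have hneg (x : X) : f (-x) ≤ (symmetryIndex f)⁻¹ * f x := by
      simpa [le_inv_mul_iff₀ hc] using (hf.le_symmetryIndex_iff hT1).1 le_rfl (-x)
    refine ⟨max 1 (symmetryIndex f)⁻¹, by positivity, fun x => ?_⟩
    rw [hnorm, max_mul_of_nonneg _ _ (hf.1 x), one_mul]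
    exact max_le_max_left _ (hneg x)
  · rintro ⟨K, hK, hbound⟩
    refine (inv_pos.2 hK).trans_le ((hf.le_symmetryIndex_iff hT1).2 fun x => ?_)
    rw [inv_mul_le_iff₀ hK]
    calc
      f x ≤ ‖-x‖ := by rw [norm_neg, hnorm]; exact le_max_left _ _
      _ ≤ K * f (-x) := hbound (-x)

theorem lipschitzWith_one (hf : IsAsymmNorm f) (hle : ∀ x, f x ≤ ‖x‖) : LipschitzWith 1 f :=
  LipschitzWith.of_le_add fun x y => calc
    f x = f (y + (x - y)) := by rw [add_sub_cancel]
    _ ≤ f y + f (x - y) := hf.2.2.1 y (x - y)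
    _ ≤ f y + dist x y := by rw [dist_eq_norm]; gcongr; exact hle _

theorem exists_mem_dualCone_extension (hf : IsAsymmNorm f) (hle : ∀ x, f x ≤ ‖x‖)
    {V : Submodule ℝ X} (φ : V →ₗ[ℝ] ℝ) {C : ℝ} (hC : 0 ≤ C) (hφ : ∀ x, φ x ≤ C * f x) :
    ∃ q ∈ dualCone f, ∀ x : V, q x = φ x := by
  obtain ⟨g, hgφ, hgf⟩ := exists_extension_of_le_sublinear ⟨V, φ⟩ (fun x => C * f x)
    (fun c hc x => by rw [hf.2.1 c hc.le, mul_left_comm])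
    (fun x y => by rw [← mul_add]; exact mul_le_mul_of_nonneg_left (hf.2.2.1 x y) hC) hφ
  have hg (x : X) : g x ≤ C * ‖x‖ := (hgf x).trans (mul_le_mul_of_nonneg_left (hle x) hC)
  have hg_abs (x : X) : |g x| ≤ C * ‖x‖ :=
    abs_le'.2 ⟨hg x, by simpa only [map_neg, norm_neg] using hg (-x)⟩
  exact ⟨StrongDual.toWeakDual (g.mkContinuous C hg_abs), ⟨C, hC, hgf⟩, hgφ⟩

theorem exists_mem_dualCone_eqOn (hf : IsAsymmNorm f) (hle : ∀ x, f x ≤ ‖x‖)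
    (hT1 : ∀ x, x ≠ 0 → 0 < f x) (p : StrongDual ℝ X) (V : Submodule ℝ X)
    [FiniteDimensional ℝ V] : ∃ q ∈ dualCone f, Set.EqOn q p V := by
  have := FiniteDimensional.proper ℝ V
  obtain ⟨K, hK, hbound⟩ := exists_norm_le_mul_of_posHomogeneous
    ((hf.lipschitzWith_one hle).continuous.comp (continuous_subtype_val (p := (· ∈ V))))
    (fun c hc x => hf.2.1 c hc x) (fun x hx => hT1 x (by simpa using hx))
  have hp (x : V) : p x ≤ ‖p‖ * K * f x := calc
    p x ≤ ‖p‖ * ‖x‖ := (le_abs_self _).trans (p.le_opNorm x)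
    _ ≤ ‖p‖ * (K * f x) := by gcongr; exact hbound x
    _ = ‖p‖ * K * f x := (mul_assoc ..).symm
  obtain ⟨q, hq, hqp⟩ := hf.exists_mem_dualCone_extension hle
    ((p : X →ₗ[ℝ] ℝ).comp V.subtype) (by positivity) hp
  exact ⟨q, hq, fun x hx => hqp ⟨x, hx⟩⟩

theorem dense_dualCone (hf : IsAsymmNorm f) (hle : ∀ x, f x ≤ ‖x‖)
    (hT1 : ∀ x, x ≠ 0 → 0 < f x) : Dense (dualCone f) := by
  refine weakDual_dense_of_forall_finset_eqOn fun p s => ?_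
  obtain ⟨q, hq, hqp⟩ :=
    hf.exists_mem_dualCone_eqOn hle hT1 p.toStrongDual (Submodule.span ℝ (s : Set X))
  exact ⟨q, hq, hqp.mono Submodule.subset_span⟩

end IsAsymmNorm

/-- For a T1 asymmetric normed space `X`: the dual cone `X^♭` is weak-star closed in
the weak-star dual of `X` iff `c(X) > 0`. -/
theorem dual_cone_weakStar_closed_iff_index_pos
    {X : Type*} [NormedAddCommGroup X] [NormedSpace ℝ X] [Nontrivial X]
    (f : X → ℝ) (hf : IsAsymmNorm f)
    (hXnorm : ∀ x : X, ‖x‖ = max (f x) (f (-x)))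
    (hT1 : ∀ x : X, x ≠ 0 → 0 < f x) :
    IsClosed {p : WeakDual ℝ X | ∃ C ≥ (0 : ℝ), ∀ x, p x ≤ C * f x} ↔
    0 < sInf ((fun x => f (-x)) '' {x | f x = 1}) := by
  have hle (x : X) : f x ≤ ‖x‖ := (le_max_left _ _).trans_eq (hXnorm x).symm
  have hdense : Dense (dualCone f) := hf.dense_dualCone hle hT1
  calc
    IsClosed (dualCone f) ↔ dualCone f = Set.univ :=
      ⟨fun hclosed => hclosed.closure_eq.symm.trans hdense.closure_eq, fun h => h ▸ isClosed_univ⟩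
    _ ↔ ∃ K > 0, ∀ x, ‖x‖ ≤ K * f x := dualCone_eq_univ_iff hf.1
    _ ↔ 0 < symmetryIndex f := (hf.symmetryIndex_pos_iff hXnorm hT1).symm
end

section
/- Let X be a nontrivial finite-dimensional real vector space, f an asymmetric norm on X with f x > 0 for every x ≠ 0 (X is T1), and let X carry the real normed space structure of the associated norm ‖x‖ = max (f x) (f (-x)). Then sInf {f (-x) : x ∈ X, f x = 1} > 0; consequently there exists a constant c > 0 with c * ‖x‖ ≤ f x ≤ ‖x‖ for all x, so the asymmetric norm is equivalent to the associated norm. -/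
theorem lipschitzWith_of_subadditive_of_le_mul_norm {E : Type*} [SeminormedAddCommGroup E]
    {f : E → ℝ} {K : NNReal} (hadd : ∀ x y, f (x + y) ≤ f x + f y) (hle : ∀ x, f x ≤ K * ‖x‖) :
    LipschitzWith K f :=
  LipschitzWith.of_le_add_mul K fun x y => by
    calc f x = f (y + (x - y)) := by rw [add_sub_cancel]
      _ ≤ f y + f (x - y) := hadd _ _
      _ ≤ f y + K * dist x y := by grw [hle (x - y), dist_eq_norm]

theorem exists_eq_one_of_posHomogeneous {V : Type*} [SMul ℝ V] {f : V → ℝ}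
    (hsmul : ∀ c : ℝ, 0 ≤ c → ∀ x, f (c • x) = c * f x) {x : V} (hx : 0 < f x) :
    ∃ y, f y = 1 :=
  ⟨(f x)⁻¹ • x, by rw [hsmul _ (inv_nonneg.mpr hx.le), inv_mul_cancel₀ hx.ne']⟩

section Norm

variable {E : Type*} [NormedAddCommGroup E] [NormedSpace ℝ E] {f : E → ℝ}

theorem mul_norm_le_of_forall_mem_sphere_le
    (hsmul : ∀ c : ℝ, 0 ≤ c → ∀ x, f (c • x) = c * f x) {c : ℝ}
    (hsphere : ∀ x ∈ Metric.sphere (0 : E) 1, c ≤ f x) (x : E) : c * ‖x‖ ≤ f x := by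
  rcases eq_or_ne x 0 with rfl | hx
  · have hzero : f 0 = 0 := by simpa using hsmul 0 le_rfl 0
    simp [hzero]
  · have hpos : 0 < ‖x‖ := norm_pos_iff.mpr hx
    have hunit : ‖x‖⁻¹ • x ∈ Metric.sphere (0 : E) 1 := by simp [norm_smul, hpos.ne']
    have hscaled : c ≤ ‖x‖⁻¹ * f x := hsmul _ (inv_nonneg.mpr hpos.le) x ▸ hsphere _ hunit
    rwa [le_inv_mul_iff₀' hpos] at hscaled

theorem exists_pos_forall_mul_norm_le [ProperSpace E] (hf : LowerSemicontinuous f)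
    (hsmul : ∀ c : ℝ, 0 ≤ c → ∀ x, f (c • x) = c * f x) (hpos : ∀ x, x ≠ 0 → 0 < f x) :
    ∃ c > 0, ∀ x, c * ‖x‖ ≤ f x := by
  rcases (Metric.sphere (0 : E) 1).eq_empty_or_nonempty with hempty | hne
  · exact ⟨1, one_pos, mul_norm_le_of_forall_mem_sphere_le hsmul (by simp [hempty])⟩
  · obtain ⟨u, hu, hmin⟩ :=
      (hf.lowerSemicontinuousOn _).exists_isMinOn hne (isCompact_sphere (0 : E) 1)
    exact ⟨f u, hpos u (ne_zero_of_mem_unit_sphere ⟨u, hu⟩),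
      mul_norm_le_of_forall_mem_sphere_le hsmul hmin⟩

end Norm

theorem div_le_indexOfSymmetry {E : Type*} [SeminormedAddGroup E] {f : E → ℝ} {c K : ℝ}
    (hc : 0 ≤ c) (hlower : ∀ x, c * ‖x‖ ≤ f x) (hupper : ∀ x, f x ≤ K * ‖x‖)
    (hone : ∃ x, f x = 1) : c / K ≤ indexOfSymmetry f := by
  refine le_csInf (Set.Nonempty.image _ hone) ?_
  rintro _ ⟨x, hx : f x = 1, rfl⟩
  have hnorm : 1 ≤ K * ‖x‖ := hx ▸ hupper x
  have hK : 0 < K := pos_of_mul_pos_left (one_pos.trans_le hnorm) (norm_nonneg x)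
  calc c / K ≤ c * ‖x‖ := by
        rw [div_le_iff₀ hK, mul_assoc, mul_comm ‖x‖]
        exact le_mul_of_one_le_right hc hnorm
    _ = c * ‖-x‖ := by rw [norm_neg]
    _ ≤ f (-x) := hlower (-x)

/-- A finite-dimensional T1 asymmetric normed space has positive index of symmetry;
consequently the asymmetric norm is equivalent to the associated norm. -/
theorem index_pos_of_finiteDimensional_T1
    {X : Type*} [NormedAddCommGroup X] [NormedSpace ℝ X]
    [FiniteDimensional ℝ X] [Nontrivial X]
    (f : X → ℝ) (hf : IsAsymmNorm f)
    (hXnorm : ∀ x : X, ‖x‖ = max (f x) (f (-x)))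
    (hT1 : ∀ x : X, x ≠ 0 → 0 < f x) :
    0 < sInf ((fun x => f (-x)) '' {x | f x = 1}) ∧
    ∃ c > (0 : ℝ), ∀ x : X, c * ‖x‖ ≤ f x ∧ f x ≤ ‖x‖ := by
  obtain ⟨-, hsmul, hadd, -⟩ := hf
  have hle (x : X) : f x ≤ ‖x‖ := hXnorm x ▸ le_max_left _ _
  have hcont : Continuous f :=
    (lipschitzWith_of_subadditive_of_le_mul_norm (K := 1) hadd (by simpa using hle)).continuous
  obtain ⟨c, hc, hbound⟩ := exists_pos_forall_mul_norm_le hcont.lowerSemicontinuous hsmul hT1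
  obtain ⟨x, hx⟩ := exists_ne (0 : X)
  have hindex : c / 1 ≤ indexOfSymmetry f :=
    div_le_indexOfSymmetry hc.le hbound (by simpa using hle)
      (exists_eq_one_of_posHomogeneous hsmul (hT1 x hx))
  exact ⟨(div_pos hc one_pos).trans_le hindex, c, hc, fun x => ⟨hbound x, hle x⟩⟩
end
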